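/- arXiv:0911.4366 — 3 statements merged into one kernel-verified Lean document; each statement's English description precedes it below -/
import Mathlib

section
/- Every finite simple graph on n ≥ 4 vertices with minimum degree at least 3 contains a diamond with at most 6·log_{3/2}(n) + 8 edges. -/
/-!
The proof is a breadth-first search from an arbitrary root `r`.

If a vertex `v` has three distinct neighbours, each joined to a common vertex by a walk avoiding `v`,
then there is a diamond with at most as many edges as the three walks have in total, plus three
(`exists_diamond_of_walks`). So, as long as there is no small diamond, each vertex `v` of level
`i` has at most two neighbours that can reach `r` quickly without passing through `v`
(`not_three_avoid`).
Neighbours of level at most `i` always can; so can a child of `v` with a second parent.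

Give a vertex weight `1` if it has at least two neighbours that are not further from `r` than
itself, and weight `s = √(3/2)` otherwise, and let every vertex split its weight equally among its
parents. A vertex of weight `s` has two children, at most one of which is shared with another
parent, hence receives at least `1 + 1/2 = s * s`. A vertex of weight `1` shares no child,
and either has two children or a single child, of weight `s`; so it receives at least `s`. Hence
the total weight of a level grows by a factor `s` per step (`levelWeight_succ`). Since level one has
weight at least `3`, after about `2 * log_{3/2} n` levels there would be more than `n` vertices.
-/

open SimpleGraph

variable {V : Type*}

/-- A diamond in a simple graph: two distinct vertices joined by three pairwise
internally vertex-disjoint paths. -/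
structure SimpleGraph.Diamond (G : SimpleGraph V) where
  u : V
  v : V
  ne : u ≠ v
  p₁ : G.Walk u v
  p₂ : G.Walk u v
  p₃ : G.Walk u v
  h₁ : p₁.IsPath
  h₂ : p₂.IsPath
  h₃ : p₃.IsPath
  ne₁₂ : p₁ ≠ p₂
  ne₁₃ : p₁ ≠ p₃
  ne₂₃ : p₂ ≠ p₃
  disj₁₂ : ∀ x, x ∈ p₁.support → x ∈ p₂.support → x = u ∨ x = v
  disj₁₃ : ∀ x, x ∈ p₁.support → x ∈ p₃.support → x = u ∨ x = v
  disj₂₃ : ∀ x, x ∈ p₂.support → x ∈ p₃.support → x = u ∨ x = v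

/-- The number of edges of a diamond. -/
def SimpleGraph.Diamond.size {G : SimpleGraph V} (D : G.Diamond) : ℕ :=
  D.p₁.length + D.p₂.length + D.p₃.length

/-- The vertex set of a diamond. -/
def SimpleGraph.Diamond.vertexSet {G : SimpleGraph V} (D : G.Diamond) : Set V :=
  {x | x ∈ D.p₁.support ∨ x ∈ D.p₂.support ∨ x ∈ D.p₃.support}

/-- The edge set of a diamond. -/
def SimpleGraph.Diamond.edgeSet {G : SimpleGraph V} (D : G.Diamond) : Set (Sym2 V) :=
  {e | e ∈ D.p₁.edges ∨ e ∈ D.p₂.edges ∨ e ∈ D.p₃.edges}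

/-- A set of vertices hitting every diamond of `G`. -/
def SimpleGraph.IsDiamondHittingSet (G : SimpleGraph V) (X : Set V) : Prop :=
  ∀ D : G.Diamond, ∃ x ∈ X, x ∈ D.vertexSet

/-- The cycles of `G`, identified with their edge sets. -/
def SimpleGraph.cycleSet (G : SimpleGraph V) : Set (Set (Sym2 V)) :=
  {s | ∃ (v : V) (w : G.Walk v v), w.IsCycle ∧ s = {e | e ∈ w.edges}}

/-- The cycles of length `i` of `G`, identified with their edge sets. -/
def SimpleGraph.cycleSetLen (G : SimpleGraph V) (i : ℕ) : Set (Set (Sym2 V)) :=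
  {s | ∃ (v : V) (w : G.Walk v v), w.IsCycle ∧ w.length = i ∧ s = {e | e ∈ w.edges}}

/-- The cycles of length `i` of `G` passing through `v`, identified with their edge sets. -/
def SimpleGraph.cycleSetLenThrough (G : SimpleGraph V) (i : ℕ) (v : V) : Set (Set (Sym2 V)) :=
  {s | ∃ w : G.Walk v v, w.IsCycle ∧ w.length = i ∧ s = {e | e ∈ w.edges}}

/-- The set of vertices at distance exactly `d` from `u`. -/
def SimpleGraph.sphere (G : SimpleGraph V) (u : V) (d : ℕ) : Set V :=
  {w | G.Reachable u w ∧ G.dist u w = d}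

open Finset

namespace SmallDiamond

/-! ### Diamonds from three walks -/

/-- Three walks from distinct neighbours of `v` to a common vertex `x`, all avoiding `v`, contain a
diamond together with `v`. By induction on the total length: if two of the walks meet in `y ≠ x`,
then `y` is the end of three walks of smaller total length; otherwise the walks already are the
legs of a diamond with ends `v` and `x`. -/
lemma exists_diamond_of_walks {V : Type*} (G : SimpleGraph V) (v : V) (N : ℕ) :
    ∀ (a b c x : V) (p : G.Walk a x) (q : G.Walk b x) (t : G.Walk c x),
      G.Adj v a → G.Adj v b → G.Adj v c → a ≠ b → a ≠ c → b ≠ c →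
      v ∉ p.support → v ∉ q.support → v ∉ t.support →
      p.length + q.length + t.length = N → ∃ D : G.Diamond, D.size ≤ N + 3 := by
  classical
  induction N using Nat.strong_induction_on with
  | _ N ih =>
  -- The shortcut: `p` and `q` meet in `y ≠ x`, so all three walks can be redirected to `y`.
  have meet : ∀ (a b c x : V) (p : G.Walk a x) (q : G.Walk b x) (t : G.Walk c x),
      G.Adj v a → G.Adj v b → G.Adj v c → a ≠ b → a ≠ c → b ≠ c →
      v ∉ p.support → v ∉ q.support → v ∉ t.support →
      p.length + q.length + t.length = N → ∀ y, y ∈ p.support → y ∈ q.support → y ≠ x →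
      ∃ D : G.Diamond, D.size ≤ N + 3 := by
    intro a b c x p q t ha hb hc hab hac hbc hp hq ht hN y hyp hyq hyx
    have h1 : (p.takeUntil y hyp).length + (p.dropUntil y hyp).length = p.length := by
      rw [← Walk.length_append, Walk.take_spec]
    have h2 : (q.takeUntil y hyq).length + (q.dropUntil y hyq).length = q.length := by
      rw [← Walk.length_append, Walk.take_spec]
    have h3 : 0 < (q.dropUntil y hyq).length := by
      rcases Nat.eq_zero_or_pos (q.dropUntil y hyq).length with h | h
      · exact absurd (Walk.eq_of_length_eq_zero h) hyx
      · exact h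
    obtain ⟨D, hD⟩ := ih
      ((p.takeUntil y hyp).length + (q.takeUntil y hyq).length
        + (t.append (p.dropUntil y hyp).reverse).length)
      (by rw [Walk.length_append, Walk.length_reverse]; omega)
      a b c y (p.takeUntil y hyp) (q.takeUntil y hyq) (t.append (p.dropUntil y hyp).reverse)
      ha hb hc hab hac hbc
      (fun h => hp (p.support_takeUntil_subset_support hyp h))
      (fun h => hq (q.support_takeUntil_subset_support hyq h))
      (by
        rw [Walk.mem_support_append_iff, Walk.support_reverse, List.mem_reverse]
        rintro (h | h)
        · exact ht h
        · exact hp (p.support_dropUntil_subset_support hyp h)) rfl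
    refine ⟨D, hD.trans ?_⟩
    rw [Walk.length_append, Walk.length_reverse]
    omega
  intro a b c x p q t ha hb hc hab hac hbc hp hq ht hN
  have hpl := p.length_bypass_le_length
  have hql := q.length_bypass_le_length
  have htl := t.length_bypass_le_length
  have hp' : v ∉ p.bypass.support := fun h => hp (p.support_bypass_subset_support h)
  have hq' : v ∉ q.bypass.support := fun h => hq (q.support_bypass_subset_support h)
  have ht' : v ∉ t.bypass.support := fun h => ht (t.support_bypass_subset_support h)
  by_cases hlt : p.bypass.length + q.bypass.length + t.bypass.length < N
  · obtain ⟨D, hD⟩ := ih _ hlt a b c x p.bypass q.bypass t.bypass ha hb hc hab hac hbc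
      hp' hq' ht' rfl
    exact ⟨D, by omega⟩
  have hN' : p.bypass.length + q.bypass.length + t.bypass.length = N := by omega
  by_cases h12 : ∃ y, y ∈ p.bypass.support ∧ y ∈ q.bypass.support ∧ y ≠ x
  · obtain ⟨y, h1, h2, h3⟩ := h12
    exact meet a b c x _ _ _ ha hb hc hab hac hbc hp' hq' ht' hN' y h1 h2 h3
  by_cases h13 : ∃ y, y ∈ p.bypass.support ∧ y ∈ t.bypass.support ∧ y ≠ x
  · obtain ⟨y, h1, h2, h3⟩ := h13
    exact meet a c b x _ _ _ ha hc hb hac hab hbc.symm hp' ht' hq' (by omega) y h1 h2 h3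
  by_cases h23 : ∃ y, y ∈ q.bypass.support ∧ y ∈ t.bypass.support ∧ y ≠ x
  · obtain ⟨y, h1, h2, h3⟩ := h23
    exact meet b c a x _ _ _ hb hc ha hbc hab.symm hac.symm hq' ht' hp' (by omega) y h1 h2 h3
  push Not at h12 h13 h23
  refine ⟨{ u := v, v := x
            ne := fun h => hp (h ▸ p.end_mem_support)
            p₁ := Walk.cons ha p.bypass
            p₂ := Walk.cons hb q.bypass
            p₃ := Walk.cons hc t.bypass
            h₁ := p.bypass_isPath.cons hp'
            h₂ := q.bypass_isPath.cons hq'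
            h₃ := t.bypass_isPath.cons ht'
            ne₁₂ := fun h => hab (by simpa using congrArg Walk.snd h)
            ne₁₃ := fun h => hac (by simpa using congrArg Walk.snd h)
            ne₂₃ := fun h => hbc (by simpa using congrArg Walk.snd h)
            disj₁₂ := ?_
            disj₁₃ := ?_
            disj₂₃ := ?_ }, ?_⟩
  · intro y h1 h2
    simp only [Walk.support_cons, List.mem_cons] at h1 h2
    grind
  · intro y h1 h2
    simp only [Walk.support_cons, List.mem_cons] at h1 h2
    grind
  · intro y h1 h2
    simp only [Walk.support_cons, List.mem_cons] at h1 h2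
    grind
  · simp only [SimpleGraph.Diamond.size, Walk.length_cons]
    omega

/-! ### Levels of the breadth-first search -/

section Levels

variable {V : Type*} (G : SimpleGraph V) (r : V)

/-- `v` lies in level `i` of the breadth-first search from `r`. Reachability is required because
`SimpleGraph.dist` is `0` between different components. -/
def InLevel (i : ℕ) (v : V) : Prop := G.Reachable r v ∧ G.dist r v = i

/-- `a` is joined to `r` by a walk of length at most `l` avoiding `v`. -/
def Avoid (v a : V) (l : ℕ) : Prop := ∃ p : G.Walk a r, v ∉ p.support ∧ p.length ≤ l

variable {G r}

lemma InLevel.unique {i j : ℕ} {v : V} (h : InLevel G r i v) (h' : InLevel G r j v) : i = j :=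
  h.2.symm.trans h'.2

lemma InLevel.of_adj {i : ℕ} {v w : V} (h : InLevel G r i v) (hvw : G.Adj v w) :
    ∃ j, InLevel G r j w ∧ j ≤ i + 1 ∧ i ≤ j + 1 := by
  have hw : G.Reachable r w := h.1.trans hvw.reachable
  refine ⟨_, ⟨hw, rfl⟩, ?_, ?_⟩
  · obtain ⟨p, hp⟩ := h.1.exists_walk_length_eq_dist
    have := dist_le (p.concat hvw)
    rw [Walk.length_concat, hp, h.2] at this
    exact this
  · obtain ⟨p, hp⟩ := hw.exists_walk_length_eq_dist
    have := dist_le (p.concat hvw.symm)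
    rw [Walk.length_concat, hp, h.2] at this
    exact this

lemma InLevel.exists_parent {i : ℕ} {v : V} (h : InLevel G r (i + 1) v) :
    ∃ u, InLevel G r i u ∧ G.Adj v u := by
  obtain ⟨p, hp⟩ := h.1.symm.exists_walk_length_eq_dist
  rw [SimpleGraph.dist_comm, h.2] at hp
  cases p with
  | nil => simp at hp
  | cons hadj q =>
    rw [Walk.length_cons] at hp
    obtain ⟨j, hj, h1, h2⟩ := h.of_adj hadj
    have h3 := dist_le q
    rw [SimpleGraph.dist_comm, hj.2] at h3
    obtain rfl : j = i := by omega
    exact ⟨_, hj, hadj⟩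

lemma InLevel.exists_walk {i : ℕ} : ∀ {v : V}, InLevel G r i v →
    ∃ p : G.Walk v r, p.length = i ∧ ∀ x ∈ p.support, x = v ∨ ∃ j < i, InLevel G r j x := by
  induction i with
  | zero =>
    intro v h
    have hr : r = v := by
      obtain ⟨p, hp⟩ := h.1.exists_walk_length_eq_dist
      rw [h.2] at hp
      exact Walk.eq_of_length_eq_zero hp
    subst hr
    exact ⟨Walk.nil, rfl, by simp⟩
  | succ i ih =>
    intro v h
    obtain ⟨u, hu, hvu⟩ := h.exists_parent
    obtain ⟨p, hp, hs⟩ := ih hu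
    refine ⟨Walk.cons hvu p, by simp [hp], ?_⟩
    intro x hx
    rw [Walk.support_cons, List.mem_cons] at hx
    rcases hx with rfl | hx
    · exact Or.inl rfl
    · right
      rcases hs x hx with rfl | ⟨j, hj, hx⟩
      · exact ⟨i, by omega, hu⟩
      · exact ⟨j, by omega, hx⟩

/-- A geodesic to `r` passes through no other vertex of its level, nor of a higher one. -/
lemma InLevel.avoid {i j l : ℕ} {v x : V} (hv : InLevel G r i v) (hx : InLevel G r j x)
    (hji : j ≤ i) (hxv : x ≠ v) (hl : j ≤ l) : Avoid G r v x l := by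
  obtain ⟨p, hp, hs⟩ := hx.exists_walk
  refine ⟨p, fun h => ?_, by omega⟩
  rcases hs v h with h | ⟨k, hk, h⟩
  · exact hxv h.symm
  · have := hv.unique h
    omega

lemma Avoid.step {v w x : V} {l : ℕ} (h : Avoid G r v x l) (hwx : G.Adj w x) (hw : w ≠ v) :
    Avoid G r v w (l + 1) := by
  obtain ⟨p, hp, hl⟩ := h
  refine ⟨Walk.cons hwx p, ?_, by simpa using hl⟩
  rw [Walk.support_cons, List.mem_cons]
  rintro (h | h)
  · exact hw h.symm
  · exact hp h

lemma Avoid.mono {v a : V} {l m : ℕ} (h : Avoid G r v a l) (hlm : l ≤ m) : Avoid G r v a m := by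
  obtain ⟨p, hp, hl⟩ := h
  exact ⟨p, hp, hl.trans hlm⟩

/-- Without small diamonds, at most two neighbours of `v` reach `r` by walks avoiding `v` of length
at most `i + 2`: three of them would give a diamond of size at most `3 * (i + 2) + 3`. -/
lemma not_three_avoid {i : ℕ} (hD : ∀ D : G.Diamond, 3 * i + 9 < D.size) {v a b c : V}
    (ha : G.Adj v a) (hb : G.Adj v b) (hc : G.Adj v c) (hab : a ≠ b) (hac : a ≠ c) (hbc : b ≠ c)
    (ra : Avoid G r v a (i + 2)) (rb : Avoid G r v b (i + 2)) (rc : Avoid G r v c (i + 2)) :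
    False := by
  obtain ⟨p, hp, hpl⟩ := ra
  obtain ⟨q, hq, hql⟩ := rb
  obtain ⟨t, ht, htl⟩ := rc
  obtain ⟨D, h⟩ := exists_diamond_of_walks G v _ a b c r p q t ha hb hc hab hac hbc hp hq ht rfl
  have := hD D
  omega

end Levels

/-! ### Growth of the levels -/

section Growth

variable {V : Type*} [Fintype V] (G : SimpleGraph V) (r : V)

open Classical in
/-- Level `i` of the breadth-first search from `r`. -/
noncomputable def level (i : ℕ) : Finset V := univ.filter (InLevel G r i)

open Classical in
/-- The neighbours of `v` that are not further from `r` than `v`. -/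
noncomputable def low (v : V) : Finset V := univ.filter fun u => G.Adj v u ∧ G.dist r u ≤ G.dist r v

open Classical in
/-- The parents of `v`: its neighbours that are closer to `r`. A vertex may have several. -/
noncomputable def par (v : V) : Finset V := univ.filter fun u => G.Adj v u ∧ G.dist r u < G.dist r v

open Classical in
/-- The children of `v`: its neighbours that are further from `r`. -/
noncomputable def up (v : V) : Finset V := univ.filter fun u => G.Adj v u ∧ G.dist r v < G.dist r u

/-- The weight of `v`: `1` if at least two neighbours of `v` are not further from `r` than `v`,
and `√(3/2)` otherwise. -/
noncomputable def weight (v : V) : ℝ := if 2 ≤ (low G r v).card then 1 else √(3 / 2)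

/-- The total weight of level `i`. -/
noncomputable def levelWeight (i : ℕ) : ℝ := ∑ v ∈ level G r i, weight G r v

variable {G r}

lemma mem_level {i : ℕ} {v : V} : v ∈ level G r i ↔ InLevel G r i v := by simp [level]

lemma mem_low {u v : V} : u ∈ low G r v ↔ G.Adj v u ∧ G.dist r u ≤ G.dist r v := by simp [low]

lemma mem_par {u v : V} : u ∈ par G r v ↔ G.Adj v u ∧ G.dist r u < G.dist r v := by simp [par]

lemma mem_up {u v : V} : u ∈ up G r v ↔ G.Adj v u ∧ G.dist r v < G.dist r u := by simp [up]

lemma sq_sqrt_three_halves : √(3 / 2 : ℝ) * √(3 / 2) = 3 / 2 := Real.mul_self_sqrt (by norm_num)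

lemma one_le_sqrt_three_halves : (1 : ℝ) ≤ √(3 / 2) := Real.one_le_sqrt.2 (by norm_num)

lemma sqrt_three_halves_le : √(3 / 2 : ℝ) ≤ 3 / 2 := by
  nlinarith [sq_sqrt_three_halves, one_le_sqrt_three_halves]

lemma one_le_weight (v : V) : 1 ≤ weight G r v := by
  unfold weight
  split_ifs
  · exact le_rfl
  · exact one_le_sqrt_three_halves

lemma weight_le (v : V) : weight G r v ≤ √(3 / 2) := by
  unfold weight
  split_ifs
  · exact one_le_sqrt_three_halves
  · exact le_rfl

lemma par_subset_low (v : V) : par G r v ⊆ low G r v := fun _ hu =>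
  mem_low.2 ⟨(mem_par.1 hu).1, (mem_par.1 hu).2.le⟩

lemma inLevel_of_mem_up {i : ℕ} {v w : V} (hv : InLevel G r i v) (hw : w ∈ up G r v) :
    InLevel G r (i + 1) w := by
  obtain ⟨hadj, hlt⟩ := mem_up.1 hw
  obtain ⟨j, hj, h1, h2⟩ := hv.of_adj hadj
  rw [hv.2, hj.2] at hlt
  obtain rfl : j = i + 1 := by omega
  exact hj

lemma inLevel_of_mem_par {i : ℕ} {u w : V} (hw : InLevel G r (i + 1) w) (hu : u ∈ par G r w) :
    InLevel G r i u := by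
  obtain ⟨hadj, hlt⟩ := mem_par.1 hu
  obtain ⟨j, hj, h1, h2⟩ := hw.of_adj hadj
  rw [hw.2, hj.2] at hlt
  obtain rfl : j = i := by omega
  exact hj

lemma avoid_of_mem_low {i l : ℕ} {v u : V} (hv : InLevel G r i v) (hu : u ∈ low G r v)
    (hl : i ≤ l) : Avoid G r v u l := by
  obtain ⟨hadj, hle⟩ := mem_low.1 hu
  obtain ⟨j, hj, -, -⟩ := hv.of_adj hadj
  rw [hv.2, hj.2] at hle
  exact hv.avoid hj hle hadj.ne' (hle.trans hl)

/-- A child of `v` with a second parent reaches `r` through that parent, avoiding `v`. -/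
lemma avoid_of_shared {i : ℕ} {v w : V} (hv : InLevel G r i v) (hw : w ∈ up G r v)
    (hpar : 2 ≤ (par G r w).card) : Avoid G r v w (i + 2) := by
  obtain ⟨y, hy, hyv⟩ := Finset.exists_mem_ne (show 1 < (par G r w).card by omega) v
  have hyl := inLevel_of_mem_par (inLevel_of_mem_up hv hw) hy
  exact ((hv.avoid hyl le_rfl hyv le_rfl).step (mem_par.1 hy).1 (mem_up.1 hw).1.ne').mono
    (by omega)

lemma card_low_le {i j : ℕ} (hD : ∀ D : G.Diamond, 3 * i + 9 < D.size) {v : V}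
    (hv : InLevel G r j v) (hj : j ≤ i + 2) : (low G r v).card ≤ 2 := by
  by_contra! h
  obtain ⟨a, b, c, ha, hb, hc, hab, hac, hbc⟩ := Finset.two_lt_card_iff.1 h
  exact not_three_avoid hD (mem_low.1 ha).1 (mem_low.1 hb).1 (mem_low.1 hc).1 hab hac hbc
    (avoid_of_mem_low hv ha hj) (avoid_of_mem_low hv hb hj) (avoid_of_mem_low hv hc hj)

lemma three_le_low_add_up [DecidableRel G.Adj] (hdeg : ∀ v : V, 3 ≤ G.degree v) (v : V) :
    3 ≤ (low G r v).card + (up G r v).card := by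
  classical
  refine (hdeg v).trans ?_
  rw [← G.card_neighborFinset_eq_degree]
  refine le_trans (Finset.card_le_card ?_) (Finset.card_union_le _ _)
  intro u hu
  rw [mem_neighborFinset] at hu
  rw [mem_union, mem_low, mem_up]
  rcases le_or_gt (G.dist r u) (G.dist r v) with h | h
  · exact Or.inl ⟨hu, h⟩
  · exact Or.inr ⟨hu, h⟩

lemma par_nonempty {i : ℕ} {w : V} (hw : InLevel G r (i + 1) w) : (par G r w).Nonempty := by
  obtain ⟨u, hu, hadj⟩ := hw.exists_parent
  exact ⟨u, mem_par.2 ⟨hadj, by rw [hu.2, hw.2]; omega⟩⟩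

/-- The local estimate: a vertex receives from its children at least `√(3/2)` times its weight. -/
lemma received_weight [DecidableRel G.Adj] (hdeg : ∀ v : V, 3 ≤ G.degree v) {i : ℕ}
    (hD : ∀ D : G.Diamond, 3 * (i + 1) + 9 < D.size) {v : V} (hv : InLevel G r (i + 1) v) :
    √(3 / 2) * weight G r v ≤ ∑ w ∈ up G r v, weight G r w / ((par G r w).card : ℝ) := by
  classical
  have hs1 := one_le_sqrt_three_halves
  have hs2 := sqrt_three_halves_le
  have hss := sq_sqrt_three_halves
  have hdegv := three_le_low_add_up (r := r) hdeg v
  have hlow := card_low_le hD hv (by omega)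
  have hnonneg : ∀ w, 0 ≤ weight G r w / ((par G r w).card : ℝ) := fun w =>
    div_nonneg (zero_le_one.trans (one_le_weight w)) (Nat.cast_nonneg _)
  have hcard : ∀ w ∈ up G r v, (par G r w).card = 1 ∨ (par G r w).card = 2 := by
    intro w hw
    have hwl := inLevel_of_mem_up hv hw
    have h1 := (par_nonempty hwl).card_pos
    have h2 := (Finset.card_le_card (par_subset_low (G := G) (r := r) w)).trans
      (card_low_le hD hwl (by omega))
    omega
  have hprivate : ∀ w, (par G r w).card = 1 →
      1 ≤ weight G r w / ((par G r w).card : ℝ) := by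
    intro w h
    rw [h, Nat.cast_one, div_one]
    exact one_le_weight w
  have hshared : ∀ w, (par G r w).card = 2 →
      1 / 2 ≤ weight G r w / ((par G r w).card : ℝ) := by
    intro w h
    rw [h]
    have := one_le_weight (G := G) (r := r) w
    push_cast
    linarith
  have hpair : ∀ w₁ ∈ up G r v, ∀ w₂ ∈ up G r v, w₁ ≠ w₂ →
      weight G r w₁ / ((par G r w₁).card : ℝ) + weight G r w₂ / ((par G r w₂).card : ℝ)
        ≤ ∑ w ∈ up G r v, weight G r w / ((par G r w).card : ℝ) := by
    intro w₁ h₁ w₂ h₂ hne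
    rw [← Finset.sum_pair (f := fun w => weight G r w / ((par G r w).card : ℝ)) hne]
    refine Finset.sum_le_sum_of_subset_of_nonneg ?_ fun w _ _ => hnonneg w
    intro w hw
    rw [mem_insert, mem_singleton] at hw
    rcases hw with rfl | rfl <;> assumption
  by_cases h2 : 2 ≤ (low G r v).card
  · rw [weight, if_pos h2, mul_one]
    obtain ⟨a, ha, b, hb, hab⟩ := Finset.one_lt_card.1 (show 1 < (low G r v).card by omega)
    have hra := avoid_of_mem_low hv ha (show i + 1 ≤ i + 1 + 2 by omega)
    have hrb := avoid_of_mem_low hv hb (show i + 1 ≤ i + 1 + 2 by omega)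
    -- The neighbours `a` and `b` use up the two that may reach `r` avoiding `v`.
    have hno : ∀ w ∈ up G r v, ¬ Avoid G r v w (i + 1 + 2) := by
      intro w hw hrw
      have hlt := (mem_up.1 hw).2
      have hla := (mem_low.1 ha).2
      have hlb := (mem_low.1 hb).2
      refine not_three_avoid hD (mem_low.1 ha).1 (mem_low.1 hb).1 (mem_up.1 hw).1 hab ?_ ?_
        hra hrb hrw
      · rintro rfl; omega
      · rintro rfl; omega
    have hone : ∀ w ∈ up G r v, (par G r w).card = 1 := by
      intro w hw
      rcases hcard w hw with h | h
      · exact h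
      · exact absurd (avoid_of_shared hv hw h.ge) (hno w hw)
    by_cases hup : 1 < (up G r v).card
    · obtain ⟨w₁, h₁, w₂, h₂, hne⟩ := Finset.one_lt_card.1 hup
      have := hpair w₁ h₁ w₂ h₂ hne
      have := hprivate w₁ (hone w₁ h₁)
      have := hprivate w₂ (hone w₂ h₂)
      linarith
    · obtain ⟨w, hw⟩ := Finset.card_eq_one.1 (show (up G r v).card = 1 by omega)
      have hwu : w ∈ up G r v := by rw [hw]; exact mem_singleton_self w
      have hwl := inLevel_of_mem_up hv hwu
      -- Otherwise the only child `w` of `v` reaches `r` through a second neighbour `x`, whose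
      -- parents differ from `v` if `x` is in the level of `w`.
      have hlw : ¬ 2 ≤ (low G r w).card := by
        intro hlw
        obtain ⟨x, hx, hxv⟩ := Finset.exists_mem_ne (show 1 < (low G r w).card by omega) v
        obtain ⟨hwx, hle⟩ := mem_low.1 hx
        obtain ⟨j, hj, h1, h3⟩ := hwl.of_adj hwx
        rw [hj.2, hwl.2] at hle
        have hwv : w ≠ v := (mem_up.1 hwu).1.ne'
        rcases Nat.lt_or_ge j (i + 1 + 1) with hlt | hge
        · exact hno w hwu
            (((hv.avoid hj (by omega) hxv (le_refl j)).step hwx hwv).mono (by omega))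
        · obtain rfl : j = i + 1 + 1 := by omega
          obtain ⟨y, hy, hxy⟩ := hj.exists_parent
          have hyv : y ≠ v := by
            rintro rfl
            have : x ∈ up G r y := mem_up.2 ⟨hxy.symm, by rw [hy.2, hj.2]; omega⟩
            rw [hw, mem_singleton] at this
            exact hwx.ne this.symm
          exact hno w hwu
            ((((hv.avoid hy le_rfl hyv le_rfl).step hxy hxv).step hwx hwv).mono (by omega))
      rw [hw, sum_singleton, hone w hwu, weight, if_neg hlw]
      simp
  · rw [weight, if_neg h2, hss]
    obtain ⟨w₁, h₁, w₂, h₂, hne⟩ := Finset.one_lt_card.1 (show 1 < (up G r v).card by omega)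
    have hp := hpair w₁ h₁ w₂ h₂ hne
    rcases hcard w₁ h₁ with c₁ | c₁ <;> rcases hcard w₂ h₂ with c₂ | c₂
    · linarith [hprivate w₁ c₁, hprivate w₂ c₂]
    · linarith [hprivate w₁ c₁, hshared w₂ c₂]
    · linarith [hshared w₁ c₁, hprivate w₂ c₂]
    · -- Two shared children and a parent of `v` all reach `r` avoiding `v`.
      obtain ⟨u, hu⟩ := par_nonempty hv
      have hul := par_subset_low (G := G) (r := r) v hu
      have hlt := (mem_par.1 hu).2
      have hlt₁ := (mem_up.1 h₁).2
      have hlt₂ := (mem_up.1 h₂).2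
      refine (not_three_avoid hD (mem_par.1 hu).1 (mem_up.1 h₁).1 (mem_up.1 h₂).1 ?_ ?_ hne
        (avoid_of_mem_low hv hul (by omega)) (avoid_of_shared hv h₁ c₁.ge)
        (avoid_of_shared hv h₂ c₂.ge)).elim
      · rintro rfl; omega
      · rintro rfl; omega

lemma levelWeight_succ [DecidableRel G.Adj] (hdeg : ∀ v : V, 3 ≤ G.degree v) {i : ℕ}
    (hD : ∀ D : G.Diamond, 3 * (i + 1) + 9 < D.size) :
    √(3 / 2) * levelWeight G r (i + 1) ≤ levelWeight G r (i + 2) := by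
  calc √(3 / 2) * levelWeight G r (i + 1)
      = ∑ v ∈ level G r (i + 1), √(3 / 2) * weight G r v := by rw [levelWeight, mul_sum]
    _ ≤ ∑ v ∈ level G r (i + 1), ∑ w ∈ up G r v, weight G r w / ((par G r w).card : ℝ) :=
        sum_le_sum fun v hv => received_weight hdeg hD (mem_level.1 hv)
    _ = ∑ w ∈ level G r (i + 2), ∑ v ∈ par G r w, weight G r w / ((par G r w).card : ℝ) := by
        refine Finset.sum_comm' fun v w => ?_
        constructor
        · rintro ⟨hv, hw⟩
          obtain ⟨h1, h2⟩ := mem_up.1 hw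
          exact ⟨mem_par.2 ⟨h1.symm, h2⟩, mem_level.2 (inLevel_of_mem_up (mem_level.1 hv) hw)⟩
        · rintro ⟨hv, hw⟩
          obtain ⟨h1, h2⟩ := mem_par.1 hv
          exact ⟨mem_level.2 (inLevel_of_mem_par (mem_level.1 hw) hv), mem_up.2 ⟨h1.symm, h2⟩⟩
    _ = levelWeight G r (i + 2) := by
        refine sum_congr rfl fun w hw => ?_
        have h := (par_nonempty (mem_level.1 hw)).card_pos
        rw [sum_const, nsmul_eq_mul]
        field_simp

lemma three_le_levelWeight_one [DecidableRel G.Adj] (hdeg : ∀ v : V, 3 ≤ G.degree v) :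
    3 ≤ levelWeight G r 1 := by
  have hr : InLevel G r 0 r := ⟨Reachable.refl r, SimpleGraph.dist_self⟩
  have h3 : 3 ≤ (level G r 1).card := by
    refine (hdeg r).trans ?_
    rw [← G.card_neighborFinset_eq_degree]
    refine Finset.card_le_card fun u hu => ?_
    rw [mem_neighborFinset] at hu
    exact mem_level.2 ⟨hu.reachable, dist_eq_one_iff_adj.2 hu⟩
  calc (3 : ℝ) ≤ ((level G r 1).card : ℝ) := by exact_mod_cast h3
    _ = ∑ v ∈ level G r 1, (1 : ℝ) := by simp
    _ ≤ levelWeight G r 1 := sum_le_sum fun v _ => one_le_weight v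

lemma levelWeight_growth [DecidableRel G.Adj] (hdeg : ∀ v : V, 3 ≤ G.degree v) (j : ℕ)
    (hD : ∀ D : G.Diamond, 3 * j + 9 < D.size) :
    3 * √(3 / 2) ^ j ≤ levelWeight G r (j + 1) := by
  induction j with
  | zero => simpa using three_le_levelWeight_one hdeg
  | succ j ih =>
    have h := ih fun D => lt_of_le_of_lt (by omega) (hD D)
    calc 3 * √(3 / 2) ^ (j + 1) = √(3 / 2) * (3 * √(3 / 2) ^ j) := by ring
      _ ≤ √(3 / 2) * levelWeight G r (j + 1) := by gcongr
      _ ≤ levelWeight G r (j + 1 + 1) := levelWeight_succ hdeg hD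

lemma levelWeight_le (i : ℕ) : levelWeight G r i ≤ √(3 / 2) * Fintype.card V := by
  calc levelWeight G r i ≤ ∑ v ∈ level G r i, √(3 / 2) := sum_le_sum fun v _ => weight_le v
    _ = √(3 / 2) * ((level G r i).card : ℝ) := by rw [sum_const, nsmul_eq_mul, mul_comm]
    _ ≤ √(3 / 2) * Fintype.card V := by gcongr; exact Finset.card_le_univ _

end Growth

end SmallDiamond

open SmallDiamond in
/-- Every finite simple graph on `n ≥ 4` vertices with minimum degree at least 3 contains
a diamond with at most `6 · log_{3/2} n + 8` edges. -/
theorem small_diamond_of_min_degree_three (V : Type*) [Fintype V] [DecidableEq V]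
    (G : SimpleGraph V) [DecidableRel G.Adj]
    (hn : 4 ≤ Fintype.card V) (hdeg : ∀ v : V, 3 ≤ G.degree v) :
    ∃ D : G.Diamond, (D.size : ℝ) ≤ 6 * Real.logb (3 / 2) (Fintype.card V) + 8 := by
  by_contra! hcon
  obtain ⟨r⟩ : Nonempty V := Fintype.card_pos_iff.1 (by omega)
  set n : ℝ := (Fintype.card V : ℝ) with hn_def
  have hn4 : (4 : ℝ) ≤ n := by rw [hn_def]; exact_mod_cast hn
  set x : ℝ := Real.logb (3 / 2) n with hx
  have hx1 : 1 ≤ x := by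
    rw [hx, Real.le_logb_iff_rpow_le (by norm_num) (by linarith), Real.rpow_one]
    linarith
  -- With `2 * x - 2 < j ≤ 2 * x - 1`, the bound `3 * j + 9` on the diamonds that
  -- `levelWeight_growth` needs to exclude is at most `6 * x + 6`.
  obtain ⟨j, hj⟩ : ∃ j : ℕ, j + 1 = ⌊2 * x⌋₊ :=
    ⟨⌊2 * x⌋₊ - 1, Nat.sub_add_cancel (Nat.le_floor (by push_cast; linarith))⟩
  have hj1 : (j : ℝ) + 1 ≤ 2 * x := by
    have := Nat.floor_le (show 0 ≤ 2 * x by linarith)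
    rw [← hj] at this
    exact_mod_cast this
  have hj2 : 2 * x < (j : ℝ) + 2 := by
    have := Nat.lt_floor_add_one (2 * x)
    rw [← hj] at this
    push_cast at this
    linarith
  have hD : ∀ D : G.Diamond, 3 * j + 9 < D.size := by
    intro D
    have := hcon D
    have : (3 * j + 9 : ℝ) < D.size := by linarith
    exact_mod_cast this
  have hs1 := one_le_sqrt_three_halves
  have hss := sq_sqrt_three_halves
  have hs0 : (0 : ℝ) < √(3 / 2) := by linarith
  have hmain := (levelWeight_growth (r := r) hdeg j hD).trans (levelWeight_le _)
  have hpow : n ≤ √(3 / 2) ^ (j + 2) := by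
    calc n = (3 / 2 : ℝ) ^ x := (Real.rpow_logb (by norm_num) (by norm_num) (by linarith)).symm
      _ = √(3 / 2) ^ (2 * x) := by
          rw [Real.rpow_mul hs0.le, Real.rpow_two, sq, hss]
      _ ≤ √(3 / 2) ^ ((j + 2 : ℕ) : ℝ) :=
          Real.rpow_le_rpow_of_exponent_le hs1 (by push_cast; linarith)
      _ = √(3 / 2) ^ (j + 2) := Real.rpow_natCast _ _
  have hpow2 : √(3 / 2 : ℝ) ^ (j + 2) = 3 / 2 * √(3 / 2) ^ j := by
    rw [pow_add, sq, hss, mul_comm]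
  -- `3 s ^ j ≤ s n ≤ s ^ (j + 3) = (3/2) s * s ^ j`, which fails since `s < 2`.
  have hs2 := sqrt_three_halves_le
  have hpos : 0 < √(3 / 2 : ℝ) ^ j := pow_pos hs0 j
  rw [hpow2] at hpow
  have h5 : √(3 / 2) * n ≤ √(3 / 2) * (3 / 2 * √(3 / 2) ^ j) := by gcongr
  nlinarith
end

section
/- Let G be a finite simple graph on n ≥ 2 vertices, let c assign a nonnegative real cost to each vertex, and let x assign a nonnegative real to each vertex such that Σ_{v ∈ V(D)} x_v ≥ 1 for every diamond D of G. Then there exists a diamond hitting set X of G with Σ_{v∈X} c_v ≤ (12·log_{3/2}(n) + 16) · Σ_{v∈V(G)} c_v·x_v. -/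
/-! The vertex weights `x` are treated as lengths and the graph is cut by region growing.

Balls of radius less than `1/4` contain no diamond. Take a shortest-path tree `T` of such a ball
`B` with root `s`. If two fundamental cycles of `T` share a tree edge, say the one above `v`, then
three edges join the subtree of `v` to its complement: that tree edge and two non-tree edges. Both
sides are connected along root paths, so joining three terminals on each side by a tripod produces a
diamond inside the union of the root paths of the four ends of the non-tree edges
(`IsTree.exists_diamond`). Its weight is less than `4 * (1/4)`, contradicting the covering
hypothesis. If instead the fundamental cycles are edge-disjoint, each tree edge lies in a cut of
`G[B]` of at most two edges. A diamond in `B` cannot be separated by a two-edge cut unless both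
edges lie on the same one of its three paths. Hence a path of the diamond that contains a non-tree
edge contains its whole fundamental cycle, which is absurd (`tree_edge_of_mem_path`); and a diamond
whose first two paths have only tree edges would have a tree edge common to both
(`no_diamond_of_fewCrossings`).

For the cost, let `F = ∑ c v * x v` and seed each ball with volume `F / n`. Divide the radii in
`[0, 1/4)` into `m = ⌊log₂ n⌋ + 1` layers. The volume of a ball never exceeds `(n + 1) * (F / n)`,
hence does not more than double in some layer; a radius in this layer chosen by averaging has a
boundary of cost at most `4 * m` times the volume of the ball (`exists_region`). Deleting the
boundary, discarding the ball and repeating on the rest costs at most `4 * m * (F + F)` in total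
(`exists_hitting_set`), and `8 * (log₂ n + 1) ≤ 12 * log_{3/2} n + 16`. -/

open SimpleGraph

variable {V : Type*}

/-- The vertex set of a diamond, as a `Finset`. -/
def SimpleGraph.Diamond.verts [DecidableEq V] {G : SimpleGraph V} (D : G.Diamond) : Finset V :=
  (D.p₁.support ++ D.p₂.support ++ D.p₃.support).toFinset

namespace DiamondCover

/-! ### Walks, cuts and tripods -/

section Walks

variable {G : SimpleGraph V}

lemma exists_crossing {u v : V} (p : G.Walk u v) (S : Set V) (h : ¬(u ∈ S ↔ v ∈ S)) :
    ∃ a b, s(a, b) ∈ p.edges ∧ a ∈ S ∧ b ∉ S := by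
  by_cases hu : u ∈ S
  · have hv : v ∉ S := fun hv => h ⟨fun _ => hv, fun _ => hu⟩
    obtain ⟨d, hd, h1, h2⟩ := p.exists_boundary_dart S hu hv
    exact ⟨d.fst, d.snd, List.mem_map.2 ⟨d, hd, rfl⟩, h1, h2⟩
  · have hv : v ∈ S := by
      by_contra hv
      exact h ⟨fun h => absurd h hu, fun h => absurd h hv⟩
    obtain ⟨d, hd, h1, h2⟩ := p.reverse.exists_boundary_dart S hv hu
    refine ⟨d.fst, d.snd, ?_, h1, h2⟩
    have : s(d.fst, d.snd) ∈ p.reverse.edges := List.mem_map.2 ⟨d, hd, rfl⟩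
    simpa using this

/-- A trail that crosses the boundary of `S` exactly once has its two ends on different sides. -/
lemma separated_of_unique_crossing {u v : V} (p : G.Walk u v) (hp : p.IsTrail) (S : Set V)
    {a b : V} (he : s(a, b) ∈ p.edges) (ha : a ∈ S) (hb : b ∉ S)
    (huniq : ∀ a' b', s(a', b') ∈ p.edges → a' ∈ S → b' ∉ S → a' = a ∧ b' = b) :
    ¬(u ∈ S ↔ v ∈ S) := by
  induction p with
  | nil => simp at he
  | @cons u u' v h q ih =>
    rw [Walk.isTrail_cons] at hp
    rw [Walk.edges_cons, List.mem_cons] at he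
    rcases he with he | he
    · -- the crossing is the first edge, hence the rest stays on one side
      have hq : u' ∈ S ↔ v ∈ S := by
        by_contra hc
        obtain ⟨a', b', h1, h2, h3⟩ := exists_crossing q S hc
        obtain ⟨rfl, rfl⟩ := huniq a' b' (by simp [h1]) h2 h3
        exact hp.2 (he ▸ h1)
      rcases Sym2.eq_iff.1 he with ⟨rfl, rfl⟩ | ⟨rfl, rfl⟩ <;> tauto
    · have hq := ih hp.1 he fun a' b' h' => huniq a' b' (by simp [h'])
      have hu : u ∈ S ↔ u' ∈ S := by
        by_contra hc
        have : s(a, b) = s(u, u') := by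
          by_cases h1 : u ∈ S
          · obtain ⟨rfl, rfl⟩ := huniq u u' (by simp) h1 (by tauto)
            rfl
          · obtain ⟨rfl, rfl⟩ := huniq u' u (by simp [Sym2.eq_swap]) (by tauto) h1
            exact Sym2.eq_swap
        exact hp.2 (this ▸ he)
      tauto

/-- Deleting an edge `mw` from a path splits it in two: some set contains `m` but not `w`, and no
other edge of the path leaves that set. -/
lemma exists_split {u v : V} (p : G.Walk u v) (hp : p.IsPath) {m w : V}
    (he : s(m, w) ∈ p.edges) :
    ∃ A : Set V, m ∈ A ∧ w ∉ A ∧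
      ∀ a b, s(a, b) ∈ p.edges → s(a, b) ≠ s(m, w) → (a ∈ A ↔ b ∈ A) := by
  induction p with
  | nil => simp at he
  | @cons u u' v h q ih =>
    rw [Walk.cons_isPath_iff] at hp
    have hu : ∀ a b, s(a, b) ∈ q.edges → a ≠ u ∧ b ≠ u := by
      intro a b hab
      constructor
      · rintro rfl
        exact hp.2 (q.fst_mem_support_of_mem_edges hab)
      · rintro rfl
        exact hp.2 (q.snd_mem_support_of_mem_edges hab)
    have hne : u ≠ u' := h.ne
    rw [Walk.edges_cons, List.mem_cons] at he
    rcases he with he | he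
    · rcases Sym2.eq_iff.1 he with ⟨rfl, rfl⟩ | ⟨rfl, rfl⟩
      · refine ⟨{m}, rfl, fun h => hne h.symm, fun a b hab hab' => ?_⟩
        rw [Walk.edges_cons, List.mem_cons] at hab
        have := hu a b (hab.resolve_left hab')
        simp [this.1, this.2]
      · refine ⟨{w}ᶜ, fun h => hne h.symm, fun h => h rfl, fun a b hab hab' => ?_⟩
        rw [Walk.edges_cons, List.mem_cons] at hab
        have := hu a b (hab.resolve_left (he ▸ hab'))
        simp [this.1, this.2]
    · obtain ⟨A, hm, hw, hA⟩ := ih hp.1 he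
      have hmw := hu m w he
      -- the first vertex joins the side of the second one
      refine ⟨{y | (y ≠ u ∧ y ∈ A) ∨ (y = u ∧ u' ∈ A)}, Or.inl ⟨hmw.1, hm⟩, ?_, ?_⟩
      · rintro (h | h)
        · exact hw h.2
        · exact hmw.2 h.1
      · intro a b hab hab'
        rw [Walk.edges_cons, List.mem_cons] at hab
        rcases hab with hab | hab
        · rcases Sym2.eq_iff.1 hab with ⟨rfl, rfl⟩ | ⟨rfl, rfl⟩ <;>
            simp [hne.symm]
        · have h1 := hu a b hab
          have h2 := hA a b hab hab'
          simp [h1.1, h1.2, h2]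

lemma eq_of_edge_mem {u v : V} (p q : G.Walk u v) (hp : p.IsPath) (hq : q.IsPath)
    (h1 : s(u, v) ∈ p.edges) (h2 : s(u, v) ∈ q.edges) : p = q := by
  have key : ∀ r : G.Walk u v, r.IsPath → s(u, v) ∈ r.edges → r.length = 1 := by
    intro r hr h
    cases r with
    | nil => simp at h
    | @cons _ w _ h' r' =>
      rw [Walk.cons_isPath_iff] at hr
      rw [Walk.edges_cons, List.mem_cons] at h
      rcases h with h | h
      · rcases Sym2.eq_iff.1 h with ⟨-, rfl⟩ | ⟨rfl, rfl⟩
        · have := (Walk.isPath_iff_nil.1 hr.1).eq_nil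
          subst this
          simp
        · exact absurd h'.ne (by simp)
      · exact absurd (r'.fst_mem_support_of_mem_edges h) hr.2
  have hp1 := key p hp h1
  have hq1 := key q hq h2
  cases p with
  | nil => simp at hp1
  | cons _ p' =>
    cases q with
    | nil => simp at hq1
    | cons _ q' =>
      cases p' with
      | cons _ _ => simp at hp1
      | nil =>
        cases q' with
        | cons _ _ => simp at hq1
        | nil => rfl

lemma edge_disjoint {u v : V} (p q : G.Walk u v) (hp : p.IsPath) (hq : q.IsPath) (hne : p ≠ q)
    (hd : ∀ x, x ∈ p.support → x ∈ q.support → x = u ∨ x = v) {a b : V}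
    (h1 : s(a, b) ∈ p.edges) (h2 : s(a, b) ∈ q.edges) : False := by
  have hab : a ≠ b := (p.adj_of_mem_edges h1).ne
  have ha := hd a (p.fst_mem_support_of_mem_edges h1) (q.fst_mem_support_of_mem_edges h2)
  have hb := hd b (p.snd_mem_support_of_mem_edges h1) (q.snd_mem_support_of_mem_edges h2)
  have he : s(a, b) = s(u, v) := by
    rcases ha with rfl | rfl <;> rcases hb with rfl | rfl
    · exact absurd rfl hab
    · rfl
    · exact Sym2.eq_swap
    · exact absurd rfl hab
  exact hne (eq_of_edge_mem p q hp hq (he ▸ h1) (he ▸ h2))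

lemma exists_first_hit {a b : V} (p : G.Walk a b) (S : Set V) (hb : b ∈ S) :
    ∃ (y : V) (q : G.Walk a y), y ∈ S ∧ (∀ z ∈ q.support, z ∈ p.support) ∧
      ∀ z ∈ q.support, z ∈ S → z = y := by
  induction p with
  | nil => exact ⟨_, Walk.nil, hb, by simp, by simp⟩
  | @cons a a' b h p ih =>
    by_cases ha : a ∈ S
    · exact ⟨a, Walk.nil, ha, by simp, by simp⟩
    · obtain ⟨y, q, hy, h1, h2⟩ := ih hb
      refine ⟨y, Walk.cons h q, hy, ?_, ?_⟩
      · intro z hz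
        rw [Walk.support_cons, List.mem_cons] at hz ⊢
        exact hz.imp id (h1 z)
      · intro z hz hzS
        rw [Walk.support_cons, List.mem_cons] at hz
        rcases hz with rfl | hz
        · exact absurd hzS ha
        · exact h2 z hz hzS

/-- `Hub G W r` says that every vertex of `W` is joined to `r` by a walk of `G` inside `W`. -/
def Hub (G : SimpleGraph V) (W : Set V) (r : V) : Prop :=
  ∀ w ∈ W, ∃ p : G.Walk w r, ∀ z ∈ p.support, z ∈ W

/-- Three vertices of a connected set are joined, inside the set, to a common vertex by three paths
that meet only there: attach the third vertex to a path between the first two. -/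
lemma exists_tripod {W : Set V} {r : V} (hW : Hub G W r) {a₁ a₂ a₃ : V}
    (h₁ : a₁ ∈ W) (h₂ : a₂ ∈ W) (h₃ : a₃ ∈ W) :
    ∃ (y : V) (q₁ : G.Walk y a₁) (q₂ : G.Walk y a₂) (q₃ : G.Walk y a₃),
      q₁.IsPath ∧ q₂.IsPath ∧ q₃.IsPath ∧
      (∀ z ∈ q₁.support, z ∈ W) ∧ (∀ z ∈ q₂.support, z ∈ W) ∧ (∀ z ∈ q₃.support, z ∈ W) ∧
      (∀ z, z ∈ q₁.support → z ∈ q₂.support → z = y) ∧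
      (∀ z, z ∈ q₁.support → z ∈ q₃.support → z = y) ∧
      (∀ z, z ∈ q₂.support → z ∈ q₃.support → z = y) := by
  classical
  obtain ⟨w₁, hw₁⟩ := hW a₁ h₁
  obtain ⟨w₂, hw₂⟩ := hW a₂ h₂
  obtain ⟨w₃, hw₃⟩ := hW a₃ h₃
  set P := (w₁.append w₂.reverse).bypass with hP
  have hPp : P.IsPath := Walk.bypass_isPath _
  have hPW : ∀ z ∈ P.support, z ∈ W := by
    intro z hz
    have := Walk.support_bypass_subset_support _ hz
    rw [Walk.mem_support_append_iff] at this
    rcases this with h | h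
    · exact hw₁ z h
    · exact hw₂ z (by simpa using h)
  obtain ⟨y, q, hy, hq1, hq2⟩ :=
    exists_first_hit (w₃.append w₁.reverse) {z | z ∈ P.support} P.start_mem_support
  have hyP : y ∈ P.support := hy
  have hqW : ∀ z ∈ q.support, z ∈ W := by
    intro z hz
    have := hq1 z hz
    rw [Walk.mem_support_append_iff] at this
    rcases this with h | h
    · exact hw₃ z h
    · exact hw₁ z (by simpa using h)
  have hsub1 : ∀ z ∈ (P.takeUntil y hyP).support, z ∈ P.support :=
    fun z hz => P.support_takeUntil_subset_support hyP hz
  have hsub2 : ∀ z ∈ (P.dropUntil y hyP).support, z ∈ P.support :=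
    fun z hz => P.support_dropUntil_subset_support hyP hz
  have hq3 : ∀ z ∈ q.bypass.reverse.support, z ∈ q.support := by
    intro z hz
    rw [Walk.support_reverse, List.mem_reverse] at hz
    exact Walk.support_bypass_subset_support _ hz
  refine ⟨y, (P.takeUntil y hyP).reverse, P.dropUntil y hyP, q.bypass.reverse,
    (hPp.takeUntil hyP).reverse, hPp.dropUntil hyP, (Walk.bypass_isPath q).reverse,
    ?_, ?_, ?_, ?_, ?_, ?_⟩
  · intro z hz
    exact hPW z (hsub1 z (by simpa using hz))
  · exact fun z hz => hPW z (hsub2 z hz)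
  · exact fun z hz => hqW z (hq3 z hz)
  · intro z hz1 hz2
    rw [Walk.support_reverse, List.mem_reverse] at hz1
    have hnd := hPp.support_nodup
    rw [← P.take_spec hyP, Walk.support_append] at hnd
    by_contra hne
    rw [Walk.mem_support_iff] at hz2
    exact (List.nodup_append.1 hnd).2.2 z hz1 z (hz2.resolve_left hne) rfl
  · intro z hz1 hz2
    rw [Walk.support_reverse, List.mem_reverse] at hz1
    exact hq2 z (hq3 z hz2) (hsub1 z hz1)
  · intro z hz1 hz2
    exact hq2 z (hq3 z hz2) (hsub2 z hz1)

/-- The path `y ⇝ a — b ⇝ z` through the edge `ab`, given its two halves. -/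
def link {y z a b : V} (q : G.Walk y a) (h : G.Adj a b) (q' : G.Walk z b) : G.Walk y z :=
  q.append (Walk.cons h q'.reverse)

lemma mem_support_link {y z a b t : V} (q : G.Walk y a) (h : G.Adj a b) (q' : G.Walk z b) :
    t ∈ (link q h q').support ↔ t ∈ q.support ∨ t ∈ q'.support := by
  rw [link, Walk.mem_support_append_iff, Walk.support_cons, List.mem_cons]
  simp only [Walk.support_reverse, List.mem_reverse]
  constructor
  · rintro (h | rfl | h)
    · exact Or.inl h
    · exact Or.inl q.end_mem_support
    · exact Or.inr h
  · rintro (h | h)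
    · exact Or.inl h
    · exact Or.inr (Or.inr h)

lemma mem_edges_link {y z a b : V} {e : Sym2 V} (q : G.Walk y a) (h : G.Adj a b)
    (q' : G.Walk z b) :
    e ∈ (link q h q').edges ↔ e ∈ q.edges ∨ e = s(a, b) ∨ e ∈ q'.edges := by
  simp [link, Walk.edges_append]

lemma isPath_link {y z a b : V} {q : G.Walk y a} (h : G.Adj a b) {q' : G.Walk z b}
    (hq : q.IsPath) (hq' : q'.IsPath) (hd : ∀ t, t ∈ q.support → t ∈ q'.support → False) :
    (link q h q').IsPath := by
  rw [Walk.isPath_def, link, Walk.support_append, Walk.support_cons, List.tail_cons,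
    Walk.support_reverse, List.nodup_append]
  refine ⟨hq.support_nodup, List.nodup_reverse.2 hq'.support_nodup, ?_⟩
  rintro t ht t' hu rfl
  exact hd t ht (by simpa using hu)

/-- Two disjoint connected sets joined by three distinct edges contain a diamond. -/
lemma exists_diamond_of_three_edges {W W' : Set V} {r r' : V} (hW : Hub G W r) (hW' : Hub G W' r')
    (hdisj : ∀ z, z ∈ W → z ∈ W' → False) {a₁ a₂ a₃ b₁ b₂ b₃ : V}
    (ha₁ : a₁ ∈ W) (ha₂ : a₂ ∈ W) (ha₃ : a₃ ∈ W)
    (hb₁ : b₁ ∈ W') (hb₂ : b₂ ∈ W') (hb₃ : b₃ ∈ W')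
    (h₁ : G.Adj a₁ b₁) (h₂ : G.Adj a₂ b₂) (h₃ : G.Adj a₃ b₃)
    (h₁₂ : (a₁, b₁) ≠ (a₂, b₂)) (h₁₃ : (a₁, b₁) ≠ (a₃, b₃)) (h₂₃ : (a₂, b₂) ≠ (a₃, b₃)) :
    ∃ D : G.Diamond, ∀ z ∈ D.vertexSet, z ∈ W ∨ z ∈ W' := by
  obtain ⟨y, q₁, q₂, q₃, p₁, p₂, p₃, s₁, s₂, s₃, d₁₂, d₁₃, d₂₃⟩ := exists_tripod hW ha₁ ha₂ ha₃
  obtain ⟨y', q₁', q₂', q₃', p₁', p₂', p₃', s₁', s₂', s₃', d₁₂', d₁₃', d₂₃'⟩ :=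
    exists_tripod hW' hb₁ hb₂ hb₃
  have hpath : ∀ {a b : V} (q : G.Walk y a) (q' : G.Walk y' b) (h : G.Adj a b),
      q.IsPath → q'.IsPath → (∀ z ∈ q.support, z ∈ W) → (∀ z ∈ q'.support, z ∈ W') →
      (link q h q').IsPath := fun q q' h hq hq' hs hs' =>
    isPath_link h hq hq' fun t ht hu => hdisj t (hs t ht) (hs' t hu)
  -- the two linked paths use different edges between `W` and `W'`
  have hne : ∀ {a b a' b' : V} (q : G.Walk y a) (q' : G.Walk y' b) (h : G.Adj a b)
      (t : G.Walk y a') (t' : G.Walk y' b') (h' : G.Adj a' b'),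
      a ∈ W → b ∈ W' → a' ∈ W → b' ∈ W' →
      (∀ z ∈ t.support, z ∈ W) → (∀ z ∈ t'.support, z ∈ W') → (a, b) ≠ (a', b') →
      link q h q' ≠ link t h' t' := by
    intro a b a' b' q q' h t t' h' ha hb ha' hb' hs hs' hab heq
    have hmem : s(a, b) ∈ (link q h q').edges := (mem_edges_link _ _ _).2 (Or.inr (Or.inl rfl))
    rw [heq, mem_edges_link] at hmem
    rcases hmem with hm | hm | hm
    · exact hdisj b (hs b (t.snd_mem_support_of_mem_edges hm)) hb
    · rcases Sym2.eq_iff.1 hm with ⟨rfl, rfl⟩ | ⟨rfl, rfl⟩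
      · exact hab rfl
      · exact hdisj _ ha hb'
    · exact hdisj a ha (hs' a (t'.fst_mem_support_of_mem_edges hm))
  have hdj : ∀ {a b a' b' : V} (q : G.Walk y a) (q' : G.Walk y' b) (h : G.Adj a b)
      (t : G.Walk y a') (t' : G.Walk y' b') (h' : G.Adj a' b'),
      (∀ z ∈ q.support, z ∈ W) → (∀ z ∈ q'.support, z ∈ W') →
      (∀ z ∈ t.support, z ∈ W) → (∀ z ∈ t'.support, z ∈ W') →
      (∀ z, z ∈ q.support → z ∈ t.support → z = y) →
      (∀ z, z ∈ q'.support → z ∈ t'.support → z = y') →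
      ∀ x, x ∈ (link q h q').support → x ∈ (link t h' t').support → x = y ∨ x = y' := by
    intro a b a' b' q q' h t t' h' hs1 hs2 hs3 hs4 hd hd' x hx hx'
    rw [mem_support_link] at hx hx'
    rcases hx with hx | hx <;> rcases hx' with hx' | hx'
    · exact Or.inl (hd x hx hx')
    · exact (hdisj x (hs1 x hx) (hs4 x hx')).elim
    · exact (hdisj x (hs3 x hx') (hs2 x hx)).elim
    · exact Or.inr (hd' x hx hx')
  refine ⟨⟨y, y', ?_, link q₁ h₁ q₁', link q₂ h₂ q₂', link q₃ h₃ q₃',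
    hpath _ _ _ p₁ p₁' s₁ s₁', hpath _ _ _ p₂ p₂' s₂ s₂', hpath _ _ _ p₃ p₃' s₃ s₃',
    hne _ _ _ _ _ _ ha₁ hb₁ ha₂ hb₂ s₂ s₂' h₁₂, hne _ _ _ _ _ _ ha₁ hb₁ ha₃ hb₃ s₃ s₃' h₁₃,
    hne _ _ _ _ _ _ ha₂ hb₂ ha₃ hb₃ s₃ s₃' h₂₃,
    hdj _ _ _ _ _ _ s₁ s₁' s₂ s₂' d₁₂ d₁₂', hdj _ _ _ _ _ _ s₁ s₁' s₃ s₃' d₁₃ d₁₃',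
    hdj _ _ _ _ _ _ s₂ s₂' s₃ s₃' d₂₃ d₂₃'⟩, ?_⟩
  · rintro rfl
    exact hdisj y (s₁ y q₁.start_mem_support) (s₁' y q₁'.start_mem_support)
  · intro z hz
    rcases hz with hz | hz | hz <;> rw [mem_support_link] at hz
    · exact hz.imp (s₁ z) (s₁' z)
    · exact hz.imp (s₂ z) (s₂' z)
    · exact hz.imp (s₃ z) (s₃' z)

end Walks

/-! ### Spanning trees and their fundamental cycles -/

section Tree

/-- The ancestors of `w`, itself included, for the parent function `p`. -/
def anc (p : V → V) (w : V) : Set V := {u | ∃ i : ℕ, p^[i] w = u}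

variable {p : V → V}

lemma self_mem_anc (w : V) : w ∈ anc p w := ⟨0, rfl⟩

lemma parent_mem_anc {u w : V} (h : u ∈ anc p w) : p u ∈ anc p w := by
  obtain ⟨i, rfl⟩ := h
  exact ⟨i + 1, Function.iterate_succ_apply' p i w⟩

lemma mem_anc_of_parent {u w : V} (h : u ∈ anc p (p w)) : u ∈ anc p w := by
  obtain ⟨i, rfl⟩ := h
  exact ⟨i + 1, rfl⟩

lemma anc_cases {u w : V} (h : u ∈ anc p w) : u = w ∨ u ∈ anc p (p w) := by
  obtain ⟨i, rfl⟩ := h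
  cases i with
  | zero => exact Or.inl rfl
  | succ i => exact Or.inr ⟨i, rfl⟩

lemma anc_trans {u v w : V} (h : u ∈ anc p v) (h' : v ∈ anc p w) : u ∈ anc p w := by
  obtain ⟨i, rfl⟩ := h
  obtain ⟨j, rfl⟩ := h'
  exact ⟨i + j, Function.iterate_add_apply p i j w⟩

/-- `p` is the parent function of a spanning tree of `G[B]` rooted at `s`; the strictly decreasing
`rank` excludes cycles. The root is its own parent. -/
structure IsTree (G : SimpleGraph V) (B : Set V) (s : V) (p : V → V) (rank : V → ℕ) : Prop where
  root : p s = s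
  mem : ∀ w ∈ B, w ≠ s → p w ∈ B
  adj : ∀ w ∈ B, w ≠ s → G.Adj w (p w)
  lt : ∀ w ∈ B, w ≠ s → rank (p w) < rank w

variable {G : SimpleGraph V} {B : Set V} {s : V} {rank : V → ℕ}

lemma IsTree.parent_mem (T : IsTree G B s p rank) {w : V} (hw : w ∈ B) : p w ∈ B := by
  by_cases h : w = s
  · rw [h, T.root, ← h]; exact hw
  · exact T.mem w hw h

lemma IsTree.anc_subset (T : IsTree G B s p rank) {u w : V} (hw : w ∈ B) (h : u ∈ anc p w) :
    u ∈ B := by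
  obtain ⟨i, rfl⟩ := h
  induction i with
  | zero => exact hw
  | succ i ih => rw [Function.iterate_succ_apply']; exact T.parent_mem ih

/-- Induction from the root towards the leaves. -/
lemma IsTree.induct (T : IsTree G B s p rank) {P : V → Prop}
    (h : ∀ w ∈ B, (w ≠ s → P (p w)) → P w) : ∀ w ∈ B, P w := by
  have : ∀ n, ∀ w ∈ B, rank w < n → P w := by
    intro n
    induction n with
    | zero => intro w _ h; omega
    | succ n ih =>
      intro w hw hn
      refine h w hw fun hs => ih _ (T.mem w hw hs) ?_
      have := T.lt w hw hs
      omega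
  exact fun w hw => this _ w hw (Nat.lt_succ_self _)

lemma IsTree.root_mem_anc (T : IsTree G B s p rank) {w : V} (hw : w ∈ B) : s ∈ anc p w := by
  refine T.induct (P := fun w => s ∈ anc p w) (fun w _ ih => ?_) w hw
  by_cases h : w = s
  · rw [h]; exact self_mem_anc s
  · exact mem_anc_of_parent (ih h)

lemma IsTree.rank_lt (T : IsTree G B s p rank) {u w : V} (hw : w ∈ B) (h : u ∈ anc p w)
    (hne : u ≠ w) : rank u < rank w := by
  refine T.induct (P := fun w => u ∈ anc p w → u ≠ w → rank u < rank w)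
    (fun w hw ih h hne => ?_) w hw h hne
  have h1 := (anc_cases h).resolve_left hne
  by_cases hs : w = s
  · subst hs
    rw [T.root] at h1
    obtain ⟨i, rfl⟩ := h1
    exact absurd (Function.iterate_fixed T.root i) hne
  · have h2 := T.lt w hw hs
    by_cases h3 : u = p w
    · rw [h3]; exact h2
    · exact (ih hs h1 h3).trans h2

lemma IsTree.notMem_anc_parent (T : IsTree G B s p rank) {v : V} (hv : v ∈ B) (hs : v ≠ s) :
    v ∉ anc p (p v) := by
  intro h
  have h1 := T.lt v hv hs
  by_cases h2 : v = p v
  · rw [← h2] at h1; omega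
  · have := T.rank_lt (T.mem v hv hs) h h2
    omega

/-- A set of tree vertices that is closed under taking parents, except at `r`, is connected. -/
lemma IsTree.hub (T : IsTree G B s p rank) {W : Set V} {r : V} (hWB : ∀ w ∈ W, w ∈ B)
    (hs : s ∈ W → r = s) (hW : ∀ w ∈ W, w ≠ r → p w ∈ W) : Hub G W r := by
  intro w hw
  refine T.induct (P := fun w => w ∈ W → ∃ q : G.Walk w r, ∀ z ∈ q.support, z ∈ W)
    (fun w hw ih hwW => ?_) w (hWB w hw) hw
  by_cases h : w = r
  · subst h
    exact ⟨Walk.nil, by simpa using hwW⟩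
  · have hws : w ≠ s := by
      rintro rfl
      exact h (hs hwW).symm
    obtain ⟨q, hq⟩ := ih hws (hW w hwW h)
    refine ⟨Walk.cons (T.adj w hw hws) q, ?_⟩
    intro z hz
    rw [Walk.support_cons, List.mem_cons] at hz
    rcases hz with rfl | hz
    · exact hwW
    · exact hq z hz

/-- If two edges of `G[B]`, other than the tree edge above `v`, leave the subtree of `v`, then some
diamond is contained in the union of the root paths of their four ends. -/
lemma IsTree.exists_diamond (T : IsTree G B s p rank) {v a b a' b' : V} (hv : v ∈ B) (hvs : v ≠ s)
    (haB : a ∈ B) (hbB : b ∈ B) (haB' : a' ∈ B) (hbB' : b' ∈ B)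
    (ha : v ∈ anc p a) (hb : v ∉ anc p b) (ha' : v ∈ anc p a') (hb' : v ∉ anc p b')
    (hab : G.Adj a b) (hab' : G.Adj a' b') (h₁ : (a, b) ≠ (v, p v)) (h₂ : (a', b') ≠ (v, p v))
    (h₃ : (a, b) ≠ (a', b')) :
    ∃ D : G.Diamond, ∀ z ∈ D.vertexSet,
      (z ∈ anc p a ∨ z ∈ anc p b) ∨ (z ∈ anc p a' ∨ z ∈ anc p b') := by
  set U : Set V := {z | (z ∈ anc p a ∨ z ∈ anc p b) ∨ (z ∈ anc p a' ∨ z ∈ anc p b')} with hU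
  have hUB : ∀ z ∈ U, z ∈ B := by
    rintro z ((h | h) | (h | h))
    · exact T.anc_subset haB h
    · exact T.anc_subset hbB h
    · exact T.anc_subset haB' h
    · exact T.anc_subset hbB' h
  have hUp : ∀ z ∈ U, p z ∈ U := fun z hz =>
    hz.imp (Or.imp parent_mem_anc parent_mem_anc) (Or.imp parent_mem_anc parent_mem_anc)
  have hW : Hub G {z | z ∈ U ∧ v ∈ anc p z} v := by
    refine T.hub (fun w hw => hUB w hw.1) ?_ ?_
    · rintro ⟨-, i, hi⟩
      rw [Function.iterate_fixed T.root i] at hi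
      exact hi.symm
    · rintro w ⟨hw, hw'⟩ hne
      exact ⟨hUp w hw, (anc_cases hw').resolve_left (Ne.symm hne)⟩
  have hW' : Hub G {z | z ∈ U ∧ v ∉ anc p z} s := by
    refine T.hub (fun w hw => hUB w hw.1) (fun _ => rfl) ?_
    rintro w ⟨hw, hw'⟩ -
    exact ⟨hUp w hw, fun h => hw' (mem_anc_of_parent h)⟩
  have hvU : v ∈ U := Or.inl (Or.inl ha)
  obtain ⟨D, hD⟩ := exists_diamond_of_three_edges hW hW' (fun z h h' => h'.2 h.2)
    (a₁ := a) (a₂ := a') (a₃ := v) (b₁ := b) (b₂ := b') (b₃ := p v)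
    ⟨Or.inl (Or.inl (self_mem_anc a)), ha⟩ ⟨Or.inr (Or.inl (self_mem_anc a')), ha'⟩
    ⟨hvU, self_mem_anc v⟩ ⟨Or.inl (Or.inr (self_mem_anc b)), hb⟩
    ⟨Or.inr (Or.inr (self_mem_anc b')), hb'⟩ ⟨hUp v hvU, T.notMem_anc_parent hv hvs⟩
    hab hab' (T.adj v hv hvs) h₃ h₁ h₂
  exact ⟨D, fun z hz => (hD z hz).elim (fun h => h.1) (fun h => h.1)⟩

/-- At most one edge of `G[B]` other than the tree edge above `v` leaves the subtree of `v`, for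
every non-root `v`. In other words, the fundamental cycles of the tree are edge-disjoint. -/
def FewCrossings (G : SimpleGraph V) (B : Set V) (s : V) (p : V → V) : Prop :=
  ∀ v ∈ B, v ≠ s → ∀ a ∈ B, ∀ b ∈ B, ∀ a' ∈ B, ∀ b' ∈ B,
    v ∈ anc p a → v ∉ anc p b → v ∈ anc p a' → v ∉ anc p b' → G.Adj a b → G.Adj a' b' →
    (a, b) ≠ (v, p v) → (a', b') ≠ (v, p v) → (a, b) = (a', b')

lemma mem_of_edge₁ {D : G.Diamond} (hD : ∀ z ∈ D.vertexSet, z ∈ B) {a b : V}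
    (h : s(a, b) ∈ D.p₁.edges) : G.Adj a b ∧ a ∈ B ∧ b ∈ B :=
  ⟨D.p₁.adj_of_mem_edges h, hD a (Or.inl (D.p₁.fst_mem_support_of_mem_edges h)),
    hD b (Or.inl (D.p₁.snd_mem_support_of_mem_edges h))⟩

lemma mem_of_edge₂ {D : G.Diamond} (hD : ∀ z ∈ D.vertexSet, z ∈ B) {a b : V}
    (h : s(a, b) ∈ D.p₂.edges) : G.Adj a b ∧ a ∈ B ∧ b ∈ B :=
  ⟨D.p₂.adj_of_mem_edges h, hD a (Or.inr (Or.inl (D.p₂.fst_mem_support_of_mem_edges h))),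
    hD b (Or.inr (Or.inl (D.p₂.snd_mem_support_of_mem_edges h)))⟩

lemma mem_of_edge₃ {D : G.Diamond} (hD : ∀ z ∈ D.vertexSet, z ∈ B) {a b : V}
    (h : s(a, b) ∈ D.p₃.edges) : G.Adj a b ∧ a ∈ B ∧ b ∈ B :=
  ⟨D.p₃.adj_of_mem_edges h, hD a (Or.inr (Or.inr (D.p₃.fst_mem_support_of_mem_edges h))),
    hD b (Or.inr (Or.inr (D.p₃.snd_mem_support_of_mem_edges h)))⟩

lemma not_shared₁₂ (D : G.Diamond) {a b : V} (hp : s(a, b) ∈ D.p₁.edges)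
    (hq : s(a, b) ∈ D.p₂.edges) : False :=
  edge_disjoint D.p₁ D.p₂ D.h₁ D.h₂ D.ne₁₂ D.disj₁₂ hp hq

lemma not_shared₁₃ (D : G.Diamond) {a b : V} (hp : s(a, b) ∈ D.p₁.edges)
    (hq : s(a, b) ∈ D.p₃.edges) : False :=
  edge_disjoint D.p₁ D.p₃ D.h₁ D.h₃ D.ne₁₃ D.disj₁₃ hp hq

lemma not_shared₂₃ (D : G.Diamond) {a b : V} (hp : s(a, b) ∈ D.p₂.edges)
    (hq : s(a, b) ∈ D.p₃.edges) : False :=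
  edge_disjoint D.p₂ D.p₃ D.h₂ D.h₃ D.ne₂₃ D.disj₂₃ hp hq

/-- If a non-tree edge `mw` lies on the first path of a diamond, then so does every tree edge of
its fundamental cycle: otherwise all three paths of the diamond would have to cross a cut consisting
of two edges. -/
lemma tree_edge_mem_path (T : IsTree G B s p rank) (hF : FewCrossings G B s p) (D : G.Diamond)
    (hD : ∀ z ∈ D.vertexSet, z ∈ B) {m w : V} (he : s(m, w) ∈ D.p₁.edges)
    (hwp : w ≠ p m) {v : V} (hvm : v ∈ anc p m) (hvw : v ∉ anc p w) :
    s(v, p v) ∈ D.p₁.edges := by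
  by_contra ht
  obtain ⟨hadj, hm, hw⟩ := mem_of_edge₁ hD he
  have hvB := T.anc_subset hm hvm
  have hvs : v ≠ s := by
    rintro rfl
    exact hvw (T.root_mem_anc hw)
  have hne : (m, w) ≠ (v, p v) := by
    intro h
    rw [Prod.mk.injEq] at h
    exact hwp (h.1 ▸ h.2)
  have hsep : ¬(D.u ∈ {z | v ∈ anc p z} ↔ D.v ∈ {z | v ∈ anc p z}) := by
    refine separated_of_unique_crossing D.p₁ D.h₁.isTrail _ he hvm hvw ?_
    intro a b hab ha hb
    obtain ⟨h1, h2, h3⟩ := mem_of_edge₁ hD hab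
    have hne' : (a, b) ≠ (v, p v) := by
      intro h
      rw [Prod.mk.injEq] at h
      rw [h.1, h.2] at hab
      exact ht hab
    exact Prod.mk.inj (hF v hvB hvs a h2 b h3 m hm w hw ha hb hvm hvw h1 hadj hne' hne)
  obtain ⟨a, b, hab, ha, hb⟩ := exists_crossing D.p₂ _ hsep
  obtain ⟨a', b', hab', ha', hb'⟩ := exists_crossing D.p₃ _ hsep
  obtain ⟨h1, h2, h3⟩ := mem_of_edge₂ hD hab
  obtain ⟨h1', h2', h3'⟩ := mem_of_edge₃ hD hab'
  by_cases hc : (a, b) = (v, p v)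
  · by_cases hc' : (a', b') = (v, p v)
    · obtain ⟨rfl, rfl⟩ := Prod.mk.inj (hc.trans hc'.symm)
      exact not_shared₂₃ D hab hab'
    · obtain ⟨rfl, rfl⟩ :=
        Prod.mk.inj (hF v hvB hvs a' h2' b' h3' m hm w hw ha' hb' hvm hvw h1' hadj hc' hne)
      exact not_shared₁₃ D he hab'
  · obtain ⟨rfl, rfl⟩ :=
      Prod.mk.inj (hF v hvB hvs a h2 b h3 m hm w hw ha hb hvm hvw h1 hadj hc hne)
    exact not_shared₁₂ D he hab

/-- Climbing from `m` to the deepest common ancestor `z` of `m` and `w` stays inside `A`. -/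
lemma climb (T : IsTree G B s p rank) {m w z : V} (hm : m ∈ B)
    (hzm : z ∈ anc p m) (hz : ∀ y ∈ anc p m, y ∈ anc p w → rank y ≤ rank z)
    {A : Set V} (hmA : m ∈ A) (hA : ∀ v ∈ anc p m, v ∉ anc p w → v ∈ A → p v ∈ A) : z ∈ A := by
  have : ∀ y ∈ B, y ∈ anc p m → z ∈ anc p y → y ∈ A → z ∈ A := by
    refine T.induct fun y hy ih hym hzy hyA => ?_
    by_cases hyz : z = y
    · rw [hyz]; exact hyA
    · have hlt := T.rank_lt hy hzy hyz
      have hyw : y ∉ anc p w := fun h => by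
        have := hz y hym h
        omega
      have hzp := (anc_cases hzy).resolve_left hyz
      have hys : y ≠ s := by
        rintro rfl
        obtain ⟨i, rfl⟩ := hzy
        exact hyz (Function.iterate_fixed T.root i)
      exact ih hys (parent_mem_anc hym) hzp (hA y hym hyw hyA)
  exact this m hm (self_mem_anc m) hzm hmA

/-- The first path of a diamond has only tree edges: otherwise it would contain a whole fundamental
cycle. -/
lemma tree_edge_of_mem_path (T : IsTree G B s p rank) (hF : FewCrossings G B s p) (D : G.Diamond)
    (hD : ∀ z ∈ D.vertexSet, z ∈ B) {m w : V} (he : s(m, w) ∈ D.p₁.edges) :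
    w = p m ∨ m = p w := by
  by_contra! hc
  obtain ⟨hadj, hm, hw⟩ := mem_of_edge₁ hD he
  have he' : s(w, m) ∈ D.p₁.edges := by rw [Sym2.eq_swap]; exact he
  -- the deepest common ancestor
  have hz : ∃ z, z ∈ anc p m ∧ z ∈ anc p w ∧
      ∀ y ∈ anc p m, y ∈ anc p w → rank y ≤ rank z := by
    by_contra! hno
    have : ∀ n : ℕ, ∃ y, y ∈ anc p m ∧ y ∈ anc p w ∧ n ≤ rank y := by
      intro n
      induction n with
      | zero => exact ⟨s, T.root_mem_anc hm, T.root_mem_anc hw, Nat.zero_le _⟩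
      | succ n ih =>
        obtain ⟨y, h1, h2, h3⟩ := ih
        obtain ⟨y', h1', h2', h3'⟩ := hno y h1 h2
        exact ⟨y', h1', h2', by omega⟩
    obtain ⟨y, h1, -, h3⟩ := this (rank m + 1)
    by_cases hy : y = m
    · rw [hy] at h3; omega
    · have := T.rank_lt hm h1 hy
      omega
  obtain ⟨z, hzm, hzw, hz⟩ := hz
  obtain ⟨A, hmA, hwA, hA⟩ := exists_split D.p₁ D.h₁ he
  have h1 : z ∈ A := by
    refine climb T hm hzm hz hmA fun v hvm hvw hvA => ?_
    refine (hA v (p v) (tree_edge_mem_path T hF D hD he hc.1 hvm hvw) fun h => ?_).1 hvA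
    rcases Sym2.eq_iff.1 h with ⟨rfl, h'⟩ | ⟨rfl, h'⟩
    · exact hc.1 h'.symm
    · exact hvw (self_mem_anc v)
  have h2 : z ∈ Aᶜ := by
    refine climb T hw hzw (fun y h h' => hz y h' h) hwA fun v hvw hvm hvA hpA => hvA ?_
    refine (hA v (p v) (tree_edge_mem_path T hF D hD he' hc.2 hvw hvm) fun h => ?_).2 hpA
    rcases Sym2.eq_iff.1 h with ⟨rfl, h'⟩ | ⟨rfl, h'⟩
    · exact hvm (self_mem_anc v)
    · exact hc.2 h'.symm
  exact h2 h1

/-- The same diamond with its first two paths exchanged. -/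
def swap (D : G.Diamond) : G.Diamond where
  u := D.u
  v := D.v
  ne := D.ne
  p₁ := D.p₂
  p₂ := D.p₁
  p₃ := D.p₃
  h₁ := D.h₂
  h₂ := D.h₁
  h₃ := D.h₃
  ne₁₂ := D.ne₁₂.symm
  ne₁₃ := D.ne₂₃
  ne₂₃ := D.ne₁₃
  disj₁₂ := fun x h h' => D.disj₁₂ x h' h
  disj₁₃ := D.disj₂₃
  disj₂₃ := D.disj₁₃

/-- A tree edge leaving the subtree of `v` is the edge above `v`. -/
lemma tree_edge_crossing {v a b : V} (ht : b = p a ∨ a = p b) (ha : v ∈ anc p a)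
    (hb : v ∉ anc p b) : a = v ∧ b = p v := by
  rcases ht with rfl | rfl
  · obtain rfl := (anc_cases ha).resolve_right hb
    exact ⟨rfl, rfl⟩
  · exact absurd (mem_anc_of_parent ha) hb

/-- A graph with a spanning tree whose fundamental cycles are edge-disjoint has no diamond. -/
lemma no_diamond_of_fewCrossings (T : IsTree G B s p rank) (hF : FewCrossings G B s p)
    (D : G.Diamond) (hD : ∀ z ∈ D.vertexSet, z ∈ B) : False := by
  have ht₁ : ∀ a b, s(a, b) ∈ D.p₁.edges → b = p a ∨ a = p b :=
    fun a b h => tree_edge_of_mem_path T hF D hD h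
  have ht₂ : ∀ a b, s(a, b) ∈ D.p₂.edges → b = p a ∨ a = p b := by
    intro a b h
    refine tree_edge_of_mem_path T hF (swap D) (fun z hz => hD z ?_) h
    rcases hz with hz | hz | hz
    · exact Or.inr (Or.inl hz)
    · exact Or.inl hz
    · exact Or.inr (Or.inr hz)
  -- an edge of the first path, written as the tree edge above some `v`
  obtain ⟨v, hv⟩ : ∃ v, s(v, p v) ∈ D.p₁.edges := by
    obtain ⟨a, b, hab, -, -⟩ := exists_crossing D.p₁ {D.u} (by simp [D.ne.symm])
    rcases ht₁ a b hab with rfl | rfl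
    · exact ⟨a, hab⟩
    · exact ⟨b, by rw [Sym2.eq_swap]; exact hab⟩
  obtain ⟨hadj, hvB, -⟩ := mem_of_edge₁ hD hv
  have hvs : v ≠ s := by
    rintro rfl
    exact hadj.ne T.root.symm
  have hsep : ¬(D.u ∈ {z | v ∈ anc p z} ↔ D.v ∈ {z | v ∈ anc p z}) :=
    separated_of_unique_crossing D.p₁ D.h₁.isTrail _ hv (self_mem_anc v)
      (T.notMem_anc_parent hvB hvs)
      fun a b hab ha hb => tree_edge_crossing (ht₁ a b hab) ha hb
  obtain ⟨a, b, hab, ha, hb⟩ := exists_crossing D.p₂ _ hsep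
  obtain ⟨rfl, rfl⟩ := tree_edge_crossing (ht₂ a b hab) ha hb
  exact not_shared₁₂ D hv hab

/-- If all root paths of a spanning tree of `G[B]` have weight less than `1/4` and all diamonds have
weight at least `1`, then `G[B]` has no diamond: two fundamental cycles sharing an edge would give a
diamond covered by four root paths. The set `A w` contains the root path of `w`. -/
lemma no_diamond_of_light_tree [Fintype V] [DecidableEq V] (T : IsTree G B s p rank)
    (x : V → ℝ) (hx : ∀ v, 0 ≤ x v) (hcov : ∀ D : G.Diamond, 1 ≤ ∑ v ∈ D.verts, x v)
    (A : V → Finset V) (hA : ∀ w ∈ B, ∀ u ∈ anc p w, u ∈ A w)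
    (hlight : ∀ w ∈ B, ∑ v ∈ A w, x v < 1 / 4)
    (D : G.Diamond) (hD : ∀ z ∈ D.vertexSet, z ∈ B) : False := by
  refine no_diamond_of_fewCrossings T ?_ D hD
  intro v hv hvs a ha b hb a' ha' b' hb' h1 h2 h3 h4 h5 h6 h7 h8
  by_contra h9
  obtain ⟨D', hD'⟩ := T.exists_diamond hv hvs ha hb ha' hb' h1 h2 h3 h4 h5 h6 h7 h8 h9
  have hun : ∀ s t : Finset V, ∑ v ∈ s ∪ t, x v ≤ ∑ v ∈ s, x v + ∑ v ∈ t, x v := by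
    intro s t
    rw [← Finset.sum_union_inter]
    exact le_add_of_nonneg_right (Finset.sum_nonneg fun v _ => hx v)
  have hsub : D'.verts ⊆ (A a ∪ A b) ∪ (A a' ∪ A b') := by
    intro z hz
    have hz' : z ∈ D'.vertexSet := by
      simpa [SimpleGraph.Diamond.verts, SimpleGraph.Diamond.vertexSet, or_assoc] using hz
    simp only [Finset.mem_union]
    exact (hD' z hz').imp (Or.imp (hA a ha z) (hA b hb z)) (Or.imp (hA a' ha' z) (hA b' hb' z))
  have hle := Finset.sum_le_sum_of_subset_of_nonneg hsub fun v _ _ => hx v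
  have := hcov D'
  have := hun (A a ∪ A b) (A a' ∪ A b')
  have := hun (A a) (A b)
  have := hun (A a') (A b')
  have := hlight a ha
  have := hlight b hb
  have := hlight a' ha'
  have := hlight b' hb'
  linarith

end Tree

/-! ### Region growing -/

section Region

open MeasureTheory

/-- `Joined G s A w` says that `w` is joined to `s` by a walk of `G` inside `A`. -/
def Joined (G : SimpleGraph V) (s : V) (A : Finset V) (w : V) : Prop :=
  ∃ q : G.Walk w s, ∀ z ∈ q.support, z ∈ A

/-- A shortest-path tree for vertex weights. `C` is the component of `s` in `G[U]`, `d w` the least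
weight of a path of `G[U]` from `s` to `w`, both ends counted, and `p` the parent function. -/
lemma exists_dist_tree (G : SimpleGraph V) (x : V → ℝ) (hx : ∀ v, 0 ≤ x v) (U : Finset V) {s : V}
    (hs : s ∈ U) :
    ∃ (C : Finset V) (d : V → ℝ) (p : V → V) (rank : V → ℕ),
      s ∈ C ∧ C ⊆ U ∧ d s = x s ∧ p s = s ∧
      (∀ w ∈ C, w ≠ s →
        p w ∈ C ∧ G.Adj w (p w) ∧ d (p w) + x w ≤ d w ∧ rank (p w) < rank w) ∧
      (∀ w ∈ C, x w ≤ d w) ∧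
      (∀ w ∈ C, ∀ u ∈ U, G.Adj w u → u ∈ C ∧ d u ≤ d w + x u) := by
  classical
  set C : Finset V := U.filter (Joined G s U) with hC
  have hCmem : ∀ w, w ∈ C ↔ w ∈ U ∧ Joined G s U w := fun w => by simp [hC]
  -- among the lightest connecting sets take one with the fewest vertices
  have hA : ∀ w, ∃ A : Finset V, w ∈ C → A ⊆ U ∧ Joined G s A w ∧
      ∀ A' : Finset V, A' ⊆ U → Joined G s A' w → ∑ v ∈ A, x v ≤ ∑ v ∈ A', x v ∧
        (∑ v ∈ A', x v ≤ ∑ v ∈ A, x v → A.card ≤ A'.card) := by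
    intro w
    by_cases hw : w ∈ C
    · obtain ⟨A₀, h0, h0'⟩ := Finset.exists_min_image (U.powerset.filter fun A => Joined G s A w)
        (fun A => ∑ v ∈ A, x v) ⟨U, by simpa using ((hCmem w).1 hw).2⟩
      obtain ⟨A, h1, h1'⟩ := Finset.exists_min_image
        ((U.powerset.filter fun A => Joined G s A w).filter
          fun A => ∑ v ∈ A, x v ≤ ∑ v ∈ A₀, x v) Finset.card ⟨A₀, by simpa using h0⟩
      simp only [Finset.mem_filter, Finset.mem_powerset] at h0 h0' h1 h1'
      refine ⟨A, fun _ => ⟨h1.1.1, h1.1.2, fun A' hA' hJ => ⟨h1.2.trans (h0' A' ⟨hA', hJ⟩), ?_⟩⟩⟩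
      exact fun hle => h1' A' ⟨⟨hA', hJ⟩, hle.trans h1.2⟩
    · exact ⟨∅, fun h => absurd h hw⟩
  choose A hA using hA
  have hsC : s ∈ C := (hCmem s).2 ⟨hs, Walk.nil, by simpa using hs⟩
  have hself : ∀ w ∈ C, w ∈ A w := by
    intro w hw
    obtain ⟨-, ⟨q, hq⟩, -⟩ := hA w hw
    exact hq w q.start_mem_support
  have hxd : ∀ w ∈ C, x w ≤ ∑ v ∈ A w, x v := fun w hw =>
    Finset.single_le_sum (fun v _ => hx v) (hself w hw)
  have hpar : ∀ w, ∃ u, (w = s → u = s) ∧ (w ∈ C → w ≠ s →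
      u ∈ C ∧ G.Adj w u ∧ ∑ v ∈ A u, x v + x w ≤ ∑ v ∈ A w, x v ∧ (A u).card < (A w).card) := by
    intro w
    by_cases hw : w ∈ C ∧ w ≠ s
    · obtain ⟨hw, hws⟩ := hw
      obtain ⟨hAU, ⟨q, hq⟩, hmin⟩ := hA w hw
      have hbq : ∀ z ∈ q.bypass.support, z ∈ A w :=
        fun z hz => hq z (Walk.support_bypass_subset_support _ hz)
      have hbp : q.bypass.IsPath := Walk.bypass_isPath q
      revert hbq hbp
      generalize q.bypass = b
      intro hbq hbp
      cases b with
      | nil => exact absurd rfl hws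
      | @cons _ u _ h b =>
        rw [Walk.cons_isPath_iff] at hbp
        have hJ : Joined G s ((A w).erase w) u := by
          refine ⟨b, fun z hz => Finset.mem_erase.2 ⟨?_, hbq z (by simp [hz])⟩⟩
          rintro rfl
          exact hbp.2 hz
        have hsub : (A w).erase w ⊆ U := (Finset.erase_subset _ _).trans hAU
        have huC : u ∈ C := by
          obtain ⟨t, ht⟩ := hJ
          exact (hCmem u).2 ⟨hsub (ht u t.start_mem_support), t, fun z hz => hsub (ht z hz)⟩
        have hsum := Finset.sum_erase_add (A w) x (hself w hw)
        obtain ⟨hAuU, ⟨t, ht⟩, hminu⟩ := hA u huC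
        obtain ⟨h1, h2⟩ := hminu _ hsub hJ
        have h3 : Joined G s (insert w (A u)) w := by
          refine ⟨Walk.cons h t, fun z hz => ?_⟩
          rw [Walk.support_cons, List.mem_cons] at hz
          exact Finset.mem_insert.2 (hz.imp id (ht z))
        have h4 := (hmin _ (Finset.insert_subset ((hCmem w).1 hw).1 hAuU) h3).1
        have h5 : ∑ v ∈ insert w (A u), x v ≤ x w + ∑ v ∈ A u, x v := by
          by_cases hmem : w ∈ A u
          · rw [Finset.insert_eq_of_mem hmem]
            linarith [hx w]
          · rw [Finset.sum_insert hmem]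
        have h6 := h2 (by linarith)
        have h7 := Finset.card_erase_lt_of_mem (hself w hw)
        exact ⟨u, fun h => absurd h hws, fun _ _ => ⟨huC, h, by linarith, by omega⟩⟩
    · exact ⟨s, fun _ => rfl, fun h1 h2 => absurd ⟨h1, h2⟩ hw⟩
  choose p hp0 hp using hpar
  refine ⟨C, fun w => ∑ v ∈ A w, x v, p, fun w => (A w).card, hsC, Finset.filter_subset _ _, ?_,
    hp0 s rfl, hp, hxd, ?_⟩
  · refine le_antisymm ?_ (hxd s hsC)
    have := ((hA s hsC).2.2 {s} (by simpa using hs) ⟨Walk.nil, by simp⟩).1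
    simpa using this
  · intro w hw u hu hadj
    obtain ⟨hwU, ⟨t, ht⟩⟩ := (hCmem w).1 hw
    have huC : u ∈ C := by
      refine (hCmem u).2 ⟨hu, Walk.cons hadj.symm t, fun z hz => ?_⟩
      rw [Walk.support_cons, List.mem_cons] at hz
      rcases hz with rfl | hz
      · exact hu
      · exact ht z hz
    refine ⟨huC, ?_⟩
    obtain ⟨hAU, ⟨q, hq⟩, -⟩ := hA w hw
    have hJ : Joined G s (insert u (A w)) u := by
      refine ⟨Walk.cons hadj.symm q, fun z hz => ?_⟩
      rw [Walk.support_cons, List.mem_cons] at hz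
      exact Finset.mem_insert.2 (hz.imp id (hq z))
    have h1 := ((hA u huC).2.2 _ (Finset.insert_subset hu hAU) hJ).1
    refine h1.trans ?_
    by_cases hmem : u ∈ A w
    · rw [Finset.insert_eq_of_mem hmem]
      linarith [hx u]
    · rw [Finset.sum_insert hmem, add_comm]

/-- Averaging over the radius: some `r ∈ [a, b)` is covered by intervals `[lo v, hi v)` of total
cost at most the mean. On the right, the bracket is the length of `[lo v, hi v) ∩ [a, b)`. -/
lemma exists_cheap_radius (C : Finset V) (c lo hi : V → ℝ) (hc : ∀ v, 0 ≤ c v)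
    (hlh : ∀ v ∈ C, lo v ≤ hi v) {a b : ℝ} (hab : a < b) :
    ∃ r ∈ Set.Ico a b, (b - a) * ∑ v ∈ C with lo v ≤ r ∧ r < hi v, c v ≤
      ∑ v ∈ C, c v * ((min b (hi v) - min b (lo v)) - (min a (hi v) - min a (lo v))) := by
  set f : ℝ → ℝ := fun r => ∑ v ∈ C, (Set.Ico (lo v) (hi v)).indicator (fun _ => c v) r with hf
  have hint : ∀ v ∈ C, IntegrableOn ((Set.Ico (lo v) (hi v)).indicator fun _ => c v)
      (Set.Ico a b) := fun v _ =>
    (integrableOn_const (by simp)).indicator measurableSet_Ico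
  have hfint : IntegrableOn f (Set.Ico a b) := integrable_finsetSum C hint
  obtain ⟨r, hr, hle⟩ := exists_le_setAverage (by simp [hab]) (by simp) hfint
  refine ⟨r, hr, ?_⟩
  have hfr : ∑ v ∈ C with lo v ≤ r ∧ r < hi v, c v = f r := by
    rw [hf, Finset.sum_filter]
    refine Finset.sum_congr rfl fun v _ => ?_
    simp [Set.indicator_apply]
  rw [setAverage_eq, smul_eq_mul, measureReal_def, Real.volume_Ico,
    ENNReal.toReal_ofReal (by linarith)] at hle
  have hle' : (b - a) * f r ≤ ∫ t in Set.Ico a b, f t := by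
    have hpos : 0 < b - a := by linarith
    calc (b - a) * f r ≤ (b - a) * ((b - a)⁻¹ * ∫ t in Set.Ico a b, f t) :=
          mul_le_mul_of_nonneg_left hle hpos.le
      _ = _ := by field_simp
  rw [hfr]
  refine hle'.trans ?_
  rw [hf, integral_finsetSum C hint]
  refine Finset.sum_le_sum fun v hv => ?_
  rw [setIntegral_indicator measurableSet_Ico, setIntegral_const, Set.Ico_inter_Ico,
    measureReal_def, Real.volume_Ico, smul_eq_mul, mul_comm, ENNReal.toReal_ofReal']
  refine mul_le_mul_of_nonneg_left ?_ (hc v)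
  have := hlh v hv
  change max (min b (hi v) - max a (lo v)) 0 ≤ _
  rcases le_total a (lo v) with h1 | h1 <;> rcases le_total b (hi v) with h2 | h2 <;>
    rcases le_total b (lo v) with h3 | h3 <;> rcases le_total a (hi v) with h4 | h4 <;>
    simp only [min_eq_left, min_eq_right, max_eq_left, max_eq_right, h1, h2, h3, h4] <;>
    refine max_le ?_ ?_ <;> linarith

/-- One step of region growing from `s`: `Q` is a ball around `s` together with its boundary `S`,
whose cost is charged to the weight of `Q`. Deleting `S` separates `Q` from the rest of `U` and
leaves no diamond inside `Q`. -/
lemma exists_region [Fintype V] [DecidableEq V] (G : SimpleGraph V) (c x : V → ℝ)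
    (hc : ∀ v, 0 ≤ c v) (hx : ∀ v, 0 ≤ x v) (hcov : ∀ D : G.Diamond, 1 ≤ ∑ v ∈ D.verts, x v)
    (U : Finset V) {s : V} (hs : s ∈ U) (V₀ : ℝ) {m : ℕ} (hm : 0 < m)
    (hV₀ : V₀ + ∑ v ∈ U, c v * x v ≤ 2 ^ m * V₀) :
    ∃ Q S : Finset V, Q ⊆ U ∧ S ⊆ Q ∧ s ∈ Q ∧
      ∑ v ∈ S, c v ≤ 4 * m * (V₀ + ∑ v ∈ Q, c v * x v) ∧
      (∀ w ∈ Q, w ∉ S → ∀ u ∈ U, G.Adj w u → u ∈ Q) ∧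
      ∀ D : G.Diamond, ∃ z ∈ D.vertexSet, ¬(z ∈ Q ∧ z ∉ S) := by
  classical
  obtain ⟨C, d, p, rank, hsC, hCU, hds, hps, htree, hxd, hstep⟩ := exists_dist_tree G x hx U hs
  have hmR : (0 : ℝ) < m := by exact_mod_cast hm
  -- the volume of the ball of radius `t`
  set vol : ℝ → ℝ := fun t => V₀ + ∑ v ∈ C, c v * (min t (d v) - min t (d v - x v)) with hvol
  set ρ : ℕ → ℝ := fun i => i / (4 * m) with hρ
  have hvol0 : vol (ρ 0) = V₀ := by
    have : ∑ v ∈ C, c v * (min (ρ 0) (d v) - min (ρ 0) (d v - x v)) = 0 := by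
      refine Finset.sum_eq_zero fun v hv => ?_
      have h1 := hxd v hv
      have h2 := hx v
      have h3 : ρ 0 = 0 := by simp [hρ]
      rw [h3, min_eq_left (by linarith), min_eq_left (by linarith)]
      simp
    simp only [hvol]
    linarith
  have hterm : ∀ t v, min t (d v) - min t (d v - x v) ≤ x v := by
    intro t v
    have := hx v
    rcases le_total t (d v) with h1 | h1 <;> rcases le_total t (d v - x v) with h2 | h2 <;>
      simp only [min_eq_left, min_eq_right, h1, h2] <;> linarith
  have hvolm : vol (ρ m) ≤ 2 ^ m * V₀ := by
    refine le_trans ?_ hV₀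
    refine add_le_add le_rfl ?_
    calc ∑ v ∈ C, c v * (min (ρ m) (d v) - min (ρ m) (d v - x v)) ≤ ∑ v ∈ C, c v * x v :=
          Finset.sum_le_sum fun v _ => mul_le_mul_of_nonneg_left (hterm _ v) (hc v)
      _ ≤ ∑ v ∈ U, c v * x v :=
          Finset.sum_le_sum_of_subset_of_nonneg hCU fun v _ _ => mul_nonneg (hc v) (hx v)
  -- the volume cannot more than double in each of the `m` layers
  obtain ⟨i, him, hi⟩ : ∃ i < m, vol (ρ (i + 1)) ≤ 2 * vol (ρ i) := by
    by_contra! hno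
    have hgrow : ∀ i, i ≤ m → 2 ^ i * V₀ ≤ vol (ρ i) := by
      intro i
      induction i with
      | zero => intro _; rw [hvol0]; simp
      | succ i ih =>
        intro hi
        have h1 := ih (by omega)
        have h2 := hno i (by omega)
        rw [pow_succ]
        linarith
    obtain ⟨k, rfl⟩ : ∃ k, m = k + 1 := ⟨m - 1, by omega⟩
    have h1 := hgrow k (by omega)
    have h2 := hno k (by omega)
    rw [pow_succ] at hvolm
    linarith
  have hρlt : ρ i < ρ (i + 1) := by
    simp only [hρ]
    push_cast
    gcongr
    linarith
  obtain ⟨r, ⟨hr1, hr2⟩, hr⟩ := exists_cheap_radius C c (fun v => d v - x v) d hc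
    (fun v _ => by linarith [hx v]) hρlt
  have hρ0 : 0 ≤ ρ i := by positivity
  have hr4 : r < 1 / 4 := by
    refine hr2.trans_le ?_
    have : ((i + 1 : ℕ) : ℝ) ≤ m := by exact_mod_cast him
    simp only [hρ]
    rw [div_le_div_iff₀ (by positivity) (by norm_num)]
    linarith
  set Q : Finset V := C.filter fun v => d v - x v ≤ r with hQ
  set S : Finset V := C.filter fun v => d v - x v ≤ r ∧ r < d v with hS
  have hball : ∀ w, w ∈ Q ∧ w ∉ S ↔ w ∈ C ∧ d w ≤ r := by
    intro w
    simp only [hQ, hS, Finset.mem_filter]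
    constructor
    · rintro ⟨⟨h1, h2⟩, h3⟩
      exact ⟨h1, not_lt.1 fun h => h3 ⟨h1, h2, h⟩⟩
    · rintro ⟨h1, h2⟩
      exact ⟨⟨h1, by linarith [hx w]⟩, fun h => absurd h.2.2 (not_lt.2 h2)⟩
  refine ⟨Q, S, (Finset.filter_subset _ _).trans hCU, ?_, ?_, ?_, ?_, ?_⟩
  · intro v hv
    simp only [hQ, hS, Finset.mem_filter] at hv ⊢
    exact ⟨hv.1, hv.2.1⟩
  · simp only [hQ, Finset.mem_filter]
    exact ⟨hsC, by linarith⟩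
  · have h1 : ρ (i + 1) - ρ i = 1 / (4 * m) := by
      simp only [hρ]
      push_cast
      ring
    have h2 : ∑ v ∈ C, c v * ((min (ρ (i + 1)) (d v) - min (ρ (i + 1)) (d v - x v)) -
        (min (ρ i) (d v) - min (ρ i) (d v - x v))) = vol (ρ (i + 1)) - vol (ρ i) := by
      simp only [hvol, mul_sub, Finset.sum_sub_distrib]
      ring
    have h3 : vol (ρ i) ≤ V₀ + ∑ v ∈ Q, c v * x v := by
      refine add_le_add le_rfl ?_
      rw [hQ, Finset.sum_filter]
      refine Finset.sum_le_sum fun v hv => ?_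
      split_ifs with h
      · exact mul_le_mul_of_nonneg_left (hterm _ v) (hc v)
      · have := hx v
        rw [min_eq_left (by linarith), min_eq_left (by linarith)]
        simp
    rw [h1, h2] at hr
    have h4 : 1 / (4 * (m : ℝ)) * ∑ v ∈ S, c v ≤ V₀ + ∑ v ∈ Q, c v * x v := by linarith
    calc ∑ v ∈ S, c v = 4 * m * (1 / (4 * (m : ℝ)) * ∑ v ∈ S, c v) := by field_simp
      _ ≤ _ := mul_le_mul_of_nonneg_left h4 (by positivity)
  · intro w hw hwS u hu hadj
    obtain ⟨h1, h2⟩ := (hball w).1 ⟨hw, hwS⟩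
    obtain ⟨h3, h4⟩ := hstep w h1 u hu hadj
    simp only [hQ, Finset.mem_filter]
    exact ⟨h3, by linarith⟩
  · intro D
    by_contra! hD
    have TC : IsTree G (C : Set V) s p rank :=
      ⟨hps, fun w hw h => (htree w hw h).1, fun w hw h => (htree w hw h).2.1,
        fun w hw h => (htree w hw h).2.2.2⟩
    have T : IsTree G {w | w ∈ C ∧ d w ≤ r} s p rank := by
      refine ⟨hps, fun w hw h => ⟨(htree w hw.1 h).1, ?_⟩, fun w hw h => (htree w hw.1 h).2.1,
        fun w hw h => (htree w hw.1 h).2.2.2⟩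
      have h1 := (htree w hw.1 h).2.2.1
      have h2 := hw.2
      have h3 := hx w
      linarith
    have hanc : ∀ w ∈ (C : Set V), ∑ v ∈ Finset.univ.filter (· ∈ anc p w), x v ≤ d w := by
      refine TC.induct fun w hw ih => ?_
      by_cases hws : w = s
      · subst hws
        have hsub : Finset.univ.filter (· ∈ anc p w) ⊆ {w} := by
          intro v hv
          simp only [Finset.mem_filter, Finset.mem_univ, true_and] at hv
          obtain ⟨j, rfl⟩ := hv
          simp [Function.iterate_fixed hps j]
        refine (Finset.sum_le_sum_of_subset_of_nonneg hsub fun v _ _ => hx v).trans ?_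
        simp [hds]
      · have hsub : Finset.univ.filter (· ∈ anc p w) ⊆
            {w} ∪ Finset.univ.filter (· ∈ anc p (p w)) := by
          intro v hv
          simp only [Finset.mem_filter, Finset.mem_univ, true_and, Finset.mem_union,
            Finset.mem_singleton] at hv ⊢
          exact anc_cases hv
        have h1 := Finset.sum_le_sum_of_subset_of_nonneg hsub fun v _ _ => hx v
        have h2 := Finset.sum_union_inter (s₁ := {w})
          (s₂ := Finset.univ.filter (· ∈ anc p (p w))) (f := x)
        have h3 : 0 ≤ ∑ v ∈ {w} ∩ Finset.univ.filter (· ∈ anc p (p w)), x v :=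
          Finset.sum_nonneg fun v _ => hx v
        have h4 := ih hws
        have h5 := (htree w hw hws).2.2.1
        rw [Finset.sum_singleton] at h2
        linarith
    exact no_diamond_of_light_tree T x hx hcov (fun w => Finset.univ.filter (· ∈ anc p w))
      (fun w _ u hu => by simpa using hu) (fun w hw => ((hanc w hw.1).trans hw.2).trans_lt hr4)
      D fun z hz => (hball z).1 (hD z hz)

/-- A diamond all of whose edges respect a set lies on one side of it. -/
lemma mem_iff_of_no_crossing {G : SimpleGraph V} (D : G.Diamond) (S : Set V)
    (h : ∀ a ∈ D.vertexSet, ∀ b ∈ D.vertexSet, G.Adj a b → a ∈ S → b ∈ S) {z : V}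
    (hz : z ∈ D.vertexSet) : D.u ∈ S ↔ z ∈ S := by
  classical
  have key : ∀ q : G.Walk D.u D.v, (∀ y ∈ q.support, y ∈ D.vertexSet) → z ∈ q.support →
      (D.u ∈ S ↔ z ∈ S) := by
    intro q hq hzq
    by_contra hc
    obtain ⟨a, b, hab, ha, hb⟩ := exists_crossing (q.takeUntil z hzq) S hc
    have hmem : ∀ y ∈ (q.takeUntil z hzq).support, y ∈ D.vertexSet :=
      fun y hy => hq y (q.support_takeUntil_subset_support hzq hy)
    exact hb (h a (hmem a (Walk.fst_mem_support_of_mem_edges _ hab)) b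
      (hmem b (Walk.snd_mem_support_of_mem_edges _ hab)) (Walk.adj_of_mem_edges _ hab) ha)
  rcases hz with hy | hy | hy
  · exact key D.p₁ (fun y h => Or.inl h) hy
  · exact key D.p₂ (fun y h => Or.inr (Or.inl h)) hy
  · exact key D.p₃ (fun y h => Or.inr (Or.inr h)) hy

/-- Region growing, repeated until `U` is used up. Each region pays for one seed `V₀`. -/
lemma exists_hitting_set [Fintype V] [DecidableEq V] (G : SimpleGraph V) (c x : V → ℝ)
    (hc : ∀ v, 0 ≤ c v) (hx : ∀ v, 0 ≤ x v) (hcov : ∀ D : G.Diamond, 1 ≤ ∑ v ∈ D.verts, x v)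
    (V₀ : ℝ) (hV : 0 ≤ V₀) {m : ℕ} (hm : 0 < m)
    (hV₀ : V₀ + ∑ v, c v * x v ≤ 2 ^ m * V₀) (U : Finset V) :
    ∃ X : Finset V, (∀ D : G.Diamond, (∀ z ∈ D.vertexSet, z ∈ U) → ∃ z ∈ X, z ∈ D.vertexSet) ∧
      ∑ v ∈ X, c v ≤ 4 * m * (U.card * V₀ + ∑ v ∈ U, c v * x v) := by
  induction U using Finset.strongInduction with
  | H U ih =>
    rcases U.eq_empty_or_nonempty with rfl | ⟨s, hs⟩
    · refine ⟨∅, fun D hD => ?_, by simp⟩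
      exact absurd (hD D.u (Or.inl D.p₁.start_mem_support)) (by simp)
    · have hcx : ∀ v, 0 ≤ c v * x v := fun v => mul_nonneg (hc v) (hx v)
      obtain ⟨Q, S, hQU, hSQ, hsQ, hcost, hclosed, hnoD⟩ :=
        exists_region G c x hc hx hcov U hs V₀ hm
          (le_trans (add_le_add le_rfl (Finset.sum_le_sum_of_subset_of_nonneg
            (Finset.subset_univ U) fun v _ _ => hcx v)) hV₀)
      have hlt : U \ Q ⊂ U := Finset.sdiff_ssubset hQU ⟨s, hsQ⟩
      obtain ⟨X, hX, hXc⟩ := ih (U \ Q) hlt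
      refine ⟨S ∪ X, fun D hD => ?_, ?_⟩
      · by_contra! hmiss
        have hS : ∀ z ∈ D.vertexSet, z ∉ S :=
          fun z hz h => hmiss z (Finset.mem_union_left _ h) hz
        have hside : ∀ z ∈ D.vertexSet, (D.u ∈ Q ↔ z ∈ Q) := fun z hz =>
          mem_iff_of_no_crossing D (Q : Set V)
            (fun a ha b hb hab haQ => hclosed a haQ (hS a ha) b (hD b hb) hab) hz
        by_cases hu : D.u ∈ Q
        · obtain ⟨z, hz, hz'⟩ := hnoD D
          exact hz' ⟨(hside z hz).1 hu, hS z hz⟩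
        · obtain ⟨z, hz, hz'⟩ := hX D fun z hz =>
            Finset.mem_sdiff.2 ⟨hD z hz, fun h => hu ((hside z hz).2 h)⟩
          exact hmiss z (Finset.mem_union_right _ hz) hz'
      · have h1 : ∑ v ∈ S ∪ X, c v ≤ ∑ v ∈ S, c v + ∑ v ∈ X, c v := by
          rw [← Finset.sum_union_inter]
          exact le_add_of_nonneg_right (Finset.sum_nonneg fun v _ => hc v)
        have h2 : ((U \ Q).card : ℝ) + 1 ≤ U.card := by exact_mod_cast Finset.card_lt_card hlt
        have h3 := Finset.sum_sdiff (f := fun v => c v * x v) hQU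
        have h4 : ((U \ Q).card : ℝ) * V₀ + V₀ ≤ U.card * V₀ := by
          have := mul_le_mul_of_nonneg_right h2 hV
          linarith
        calc ∑ v ∈ S ∪ X, c v
            ≤ 4 * m * (V₀ + ∑ v ∈ Q, c v * x v) +
              4 * m * ((U \ Q).card * V₀ + ∑ v ∈ U \ Q, c v * x v) := by linarith
          _ = 4 * m * ((((U \ Q).card : ℝ) * V₀ + V₀) + ∑ v ∈ U, c v * x v) := by
              rw [← h3]; ring
          _ ≤ _ := by gcongr

end Region

end DiamondCover

/-- Rounding a fractional diamond cover: if `x ≥ 0` satisfies `Σ_{v ∈ V(D)} x_v ≥ 1` for every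
diamond `D` of `G`, then there is a diamond hitting set `X` with
`Σ_{v∈X} c_v ≤ (12·log_{3/2} n + 16) · Σ_v c_v·x_v`. -/
theorem diamond_hitting_set_of_fractional_cover (V : Type*) [Fintype V] [DecidableEq V]
    (G : SimpleGraph V) (hn : 2 ≤ Fintype.card V)
    (c x : V → ℝ) (hc : ∀ v, 0 ≤ c v) (hx : ∀ v, 0 ≤ x v)
    (hcov : ∀ D : G.Diamond, 1 ≤ ∑ v ∈ D.verts, x v) :
    ∃ X : Finset V, G.IsDiamondHittingSet ↑X ∧
      ∑ v ∈ X, c v ≤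
        (12 * Real.logb (3 / 2) (Fintype.card V) + 16) * ∑ v : V, c v * x v := by
  classical
  set n : ℕ := Fintype.card V with hn_def
  set F : ℝ := ∑ v : V, c v * x v with hF
  have hF0 : 0 ≤ F := Finset.sum_nonneg fun v _ => mul_nonneg (hc v) (hx v)
  have hnR : (2 : ℝ) ≤ n := by exact_mod_cast hn
  set m : ℕ := Nat.log 2 n + 1 with hm
  -- the seed `F / n` makes all seeds together cost `F`, and `2 ^ m ≥ n + 1` bounds the doublings
  have hpow : (n : ℝ) + 1 ≤ 2 ^ m := by
    have := Nat.lt_pow_succ_log_self (b := 2) (by norm_num) n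
    exact_mod_cast this
  have hseed : F / n + F ≤ 2 ^ m * (F / n) := by
    have h1 : F / n + F = (n + 1) * (F / n) := by field_simp; ring
    rw [h1]
    exact mul_le_mul_of_nonneg_right hpow (by positivity)
  obtain ⟨X, hX, hXc⟩ := DiamondCover.exists_hitting_set G c x hc hx hcov (F / n) (by positivity)
    (Nat.succ_pos (Nat.log 2 n)) hseed Finset.univ
  refine ⟨X, fun D => ?_, hXc.trans ?_⟩
  · obtain ⟨z, hz, hz'⟩ := hX D fun z _ => Finset.mem_univ z
    exact ⟨z, by exact_mod_cast hz, hz'⟩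
  · have h1 : ((Finset.univ : Finset V).card : ℝ) * (F / n) = F := by
      rw [Finset.card_univ, ← hn_def]
      field_simp
    rw [h1, ← hF]
    have h2 : (Nat.log 2 n : ℝ) ≤ Real.logb 2 n := by
      have := Real.natLog_le_logb n 2
      exact_mod_cast this
    have h3 : Real.logb 2 n ≤ Real.logb (3 / 2) n := by
      have hl : 0 ≤ Real.log n := Real.log_nonneg (by linarith)
      have h32 : 0 < Real.log (3 / 2) := Real.log_pos (by norm_num)
      have hle : Real.log (3 / 2) ≤ Real.log 2 := Real.log_le_log (by norm_num) (by norm_num)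
      unfold Real.logb
      gcongr
    have h4 : (0 : ℝ) ≤ Nat.log 2 n := by positivity
    have h5 : 8 * ((Nat.log 2 n : ℝ) + 1) ≤ 12 * Real.logb (3 / 2) n + 16 := by linarith
    calc 4 * ((Nat.log 2 n + 1 : ℕ) : ℝ) * (F + F) = 8 * ((Nat.log 2 n : ℝ) + 1) * F := by
          push_cast; ring
      _ ≤ _ := mul_le_mul_of_nonneg_right h5 hF0
end

section
/- For every finite simple graph G on n ≥ 2 vertices there exist a diamond hitting set X of G and a family of t pairwise vertex-disjoint diamonds of G such that |X| ≤ (6·log_{3/2}(n) + 8)·t. In particular, since any diamond hitting set must contain at least one vertex of each of the t disjoint diamonds, the minimum size of a diamond hitting set of G is at least t and at most (6·log_{3/2}(n) + 8)·t. -/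
/-!
Call a vertex set `S` *fat* if it contains a vertex `v` and three distinct neighbours of `v` lying
in one component of `G[S] - v`. A set is fat if and only if it contains a diamond
(`fat_vertexSet`, `Fat.exists_diamond`), and fatness is much easier to transport between graphs
than triples of disjoint paths.

The hitting set and the packing are built greedily, by induction on a vertex set `W` to which the
graph has been restricted (`exists_hitting_packing`). If `G[W]` has a diamond, there are a fat set
`S ⊆ W` and a set `Q` of at most `6 ⌊log₂ n⌋ + 8` vertices such that every diamond of `G[W]`
avoiding `Q` also avoids `S` (`exists_fat_and_hitting`). Then `Q` is added to the hitting set,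
a diamond inside `S` to the packing, and the construction continues in `W \ S`.

To find `S` and `Q`, let `B ⊆ W` be of minimum size subject to `G[W \ B]` having no diamond and
each component of `G[W \ B]` having at most two neighbours in `B` (`Good`). A set `Q ⊆ B` spans the
set `S` of the vertices of `Q` and of all components of `G[W \ B]` whose neighbours in `B` all lie
in `Q`; a diamond avoiding `Q` and meeting `S` would lie inside one component, which contains no
diamond, so the hitting property always holds (`Good.fat_diff`). It remains to find a small `Q` with a fat span.

* If some `b ∈ B` forms a diamond with components of `G[W \ B]`, then such a diamond uses one
  component only, and `b` and the other neighbour of that component form `Q`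
  (`Good.fat_span_pair`).
* Otherwise, since no `b` can be dropped from `B`, every `b ∈ B` has at least three neighbours in
  the torso, the graph on `B` obtained by replacing each component of `G[W \ B]` by an edge between
  its neighbours (`Good.three_neighbors`). A graph of minimum degree three has a fat set `Q` of at
  most `6 ⌊log₂ n⌋ + 8` vertices (`exists_small_fat`): in a breadth-first search tree of a graph
  with no small fat set, every vertex other than the root is incident with at most one non-tree
  edge and has at least two grandchildren, so that the levels double in size every two steps. Fat
  sets of the torso have fat spans in `G` (`Good.fat_span`).

Finally `⌊log₂ n⌋ ≤ log_{3/2} n`.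
-/

open SimpleGraph

variable {V : Type*}

namespace DiamondPacking

/-! ### Connections inside a set, fat sets and diamonds -/

/-- `ConnIn G A x y`: the vertices `x` and `y` are joined by a walk of `G` all of whose vertices
(including `x` and `y`) lie in `A`. -/
def ConnIn (G : SimpleGraph V) (A : Set V) (x y : V) : Prop :=
  ∃ p : G.Walk x y, ∀ w ∈ p.support, w ∈ A

/-- `Fat G S`: inside `S` there are a vertex `v` and three distinct neighbours of `v` which lie in
a common connected component of `G[S] - v`. This is equivalent to `G[S]` containing a diamond, see
`fat_vertexSet` and `Fat.exists_diamond`. -/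
def Fat (G : SimpleGraph V) (S : Set V) : Prop :=
  ∃ v ∈ S, ∃ x y z, G.Adj v x ∧ G.Adj v y ∧ G.Adj v z ∧ x ≠ y ∧ x ≠ z ∧ y ≠ z ∧
    ConnIn G (S \ {v}) x y ∧ ConnIn G (S \ {v}) x z

section basic

variable {G : SimpleGraph V} {A A' S : Set V} {x y z : V}

lemma ConnIn.mono (h : ConnIn G A x y) (hA : A ⊆ A') : ConnIn G A' x y := by
  obtain ⟨p, hp⟩ := h
  exact ⟨p, fun w hw => hA (hp w hw)⟩

lemma ConnIn.refl (h : x ∈ A) : ConnIn G A x x := ⟨.nil, by simpa using h⟩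

lemma ConnIn.left_mem (h : ConnIn G A x y) : x ∈ A := by
  obtain ⟨p, hp⟩ := h
  exact hp x p.start_mem_support

lemma ConnIn.right_mem (h : ConnIn G A x y) : y ∈ A := by
  obtain ⟨p, hp⟩ := h
  exact hp y p.end_mem_support

lemma ConnIn.symm (h : ConnIn G A x y) : ConnIn G A y x := by
  obtain ⟨p, hp⟩ := h
  exact ⟨p.reverse, by simpa using hp⟩

lemma ConnIn.trans (h : ConnIn G A x y) (h' : ConnIn G A y z) : ConnIn G A x z := by
  obtain ⟨p, hp⟩ := h
  obtain ⟨q, hq⟩ := h'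
  refine ⟨p.append q, fun w hw => ?_⟩
  rcases (Walk.mem_support_append_iff p q).1 hw with h | h
  exacts [hp w h, hq w h]

lemma ConnIn.cons (h : G.Adj x y) (hx : x ∈ A) (h' : ConnIn G A y z) : ConnIn G A x z := by
  obtain ⟨p, hp⟩ := h'
  refine ⟨.cons h p, fun w hw => ?_⟩
  rcases List.mem_cons.1 ((Walk.support_cons h p) ▸ hw) with rfl | h
  exacts [hx, hp w h]

lemma ConnIn.of_mem_support (p : G.Walk x y) (hp : ∀ w ∈ p.support, w ∈ A) (hz : z ∈ p.support) :
    ConnIn G A x z ∧ ConnIn G A z y := by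
  classical
  exact ⟨⟨p.takeUntil z hz, fun w hw => hp w (p.support_takeUntil_subset_support hz hw)⟩,
    ⟨p.dropUntil z hz, fun w hw => hp w (p.support_dropUntil_subset_support hz hw)⟩⟩

/-- A walk inside `A` cannot leave a set of vertices that is closed under adjacency inside `A`. -/
lemma ConnIn.of_closed {P : V → Prop} (h : ConnIn G A x y) (hx : P x)
    (hP : ∀ a b, a ∈ A → b ∈ A → G.Adj a b → P a → P b) : ConnIn G (A ∩ {w | P w}) x y := by
  obtain ⟨p, hp⟩ := h
  induction p with
  | nil => exact .refl ⟨hp _ (by simp), hx⟩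
  | cons h q ih =>
    have hq : ∀ w ∈ q.support, w ∈ A := fun w hw => hp w (by simp [hw])
    have hu := hp _ (Walk.start_mem_support _)
    exact .cons h ⟨hu, hx⟩ (ih (hP _ _ hu (hq _ q.start_mem_support) h hx) hq)

lemma Fat.mono (h : Fat G S) {T : Set V} (hS : S ⊆ T) : Fat G T := by
  obtain ⟨v, hv, x, y, z, hx, hy, hz, hxy, hxz, hyz, c₁, c₂⟩ := h
  have hd : S \ {v} ⊆ T \ {v} := Set.sdiff_subset_sdiff_left hS
  exact ⟨v, hS hv, x, y, z, hx, hy, hz, hxy, hxz, hyz, c₁.mono hd, c₂.mono hd⟩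

end basic

section diamond

variable {G : SimpleGraph V}

lemma penultimate_ne {u v : V} (hne : u ≠ v) {p q : G.Walk u v} (hp : p.IsPath) (hq : q.IsPath)
    (hpq : p ≠ q) (hd : ∀ x, x ∈ p.support → x ∈ q.support → x = u ∨ x = v) :
    p.penultimate ≠ q.penultimate := by
  intro h
  have hpn : ¬ p.Nil := fun h => hne h.eq
  have hqn : ¬ q.Nil := fun h => hne h.eq
  -- A path whose penultimate vertex is its first vertex is a single edge.
  have key : ∀ r : G.Walk u v, r.IsPath → ¬ r.Nil → r.penultimate = u →
      ∃ h : G.Adj u v, r = .cons h .nil := by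
    intro r hr hrn hru
    have h1 : G.Adj r.penultimate v := r.adj_penultimate hrn
    have h2 := r.concat_dropLast h1
    have h3 : ∀ (t : V) (s : G.Walk u t) (h : G.Adj t v), t = u → (s.concat h).IsPath →
        ∃ h' : G.Adj u v, s.concat h = .cons h' .nil := by
      rintro t s h' rfl hs
      rw [Walk.concat_isPath_iff] at hs
      obtain rfl := Walk.eq_nil_iff_nil.2 (Walk.isPath_iff_nil.1 hs.1)
      exact ⟨h', rfl⟩
    rw [← h2] at hr ⊢
    exact h3 _ _ _ hru hr
  have hu : p.penultimate = u := by
    rcases hd p.penultimate (List.mem_of_mem_dropLast (p.penultimate_mem_dropLast_support hpn))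
      (h ▸ List.mem_of_mem_dropLast (q.penultimate_mem_dropLast_support hqn)) with h' | h'
    · exact h'
    · exact absurd h' (p.adj_penultimate hpn).ne
  obtain ⟨_, h1⟩ := key p hp hpn hu
  obtain ⟨_, h2⟩ := key q hq hqn (h ▸ hu)
  exact hpq (h1.trans h2.symm)

lemma connIn_penultimate {u v : V} (hne : u ≠ v) {p : G.Walk u v} (hp : p.IsPath) {S : Set V}
    (hS : ∀ w ∈ p.support, w ∈ S) : ConnIn G (S \ {v}) u p.penultimate := by
  have hpn : ¬ p.Nil := fun h => hne h.eq
  have h1 : G.Adj p.penultimate v := p.adj_penultimate hpn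
  have h2 := p.concat_dropLast h1
  rw [← h2, Walk.concat_isPath_iff] at hp
  refine ⟨p.dropLast, fun w hw => ⟨hS w ?_, fun hv => hp.2 (hv ▸ hw)⟩⟩
  rw [← h2, Walk.support_concat]
  simp [hw]

lemma fat_vertexSet (D : G.Diamond) : Fat G D.vertexSet := by
  have hn : ∀ p : G.Walk D.u D.v, ¬ p.Nil := fun p h => D.ne h.eq
  have c₁ := connIn_penultimate D.ne D.h₁ (S := D.vertexSet) fun w hw => .inl hw
  have c₂ := connIn_penultimate D.ne D.h₂ (S := D.vertexSet) fun w hw => .inr (.inl hw)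
  have c₃ := connIn_penultimate D.ne D.h₃ (S := D.vertexSet) fun w hw => .inr (.inr hw)
  exact ⟨D.v, .inl D.p₁.end_mem_support, _, _, _, (D.p₁.adj_penultimate (hn _)).symm,
    (D.p₂.adj_penultimate (hn _)).symm, (D.p₃.adj_penultimate (hn _)).symm,
    penultimate_ne D.ne D.h₁ D.h₂ D.ne₁₂ D.disj₁₂, penultimate_ne D.ne D.h₁ D.h₃ D.ne₁₃ D.disj₁₃,
    penultimate_ne D.ne D.h₂ D.h₃ D.ne₂₃ D.disj₂₃, c₁.symm.trans c₂, c₁.symm.trans c₃⟩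

/-- A walk ending in `M` has an initial part that meets `M` only in its last vertex. -/
lemma exists_first_hit {M : Set V} {z y : V} (p : G.Walk z y) (hy : y ∈ M) :
    ∃ u ∈ M, ∃ q : G.Walk z u, q.support ⊆ p.support ∧ ∀ w ∈ q.support, w ∈ M → w = u := by
  induction p with
  | nil => exact ⟨_, hy, .nil, by simp, by simp⟩
  | @cons a b c h p ih =>
    by_cases ha : a ∈ M
    · exact ⟨a, ha, .nil, by simp, by simp⟩
    · obtain ⟨u, hu, q, hq, hM⟩ := ih hy
      refine ⟨u, hu, .cons h q, ?_, ?_⟩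
      · intro w hw
        rw [Walk.support_cons, List.mem_cons] at hw ⊢
        exact hw.imp id fun h => hq h
      · intro w hw hwM
        rw [Walk.support_cons, List.mem_cons] at hw
        rcases hw with rfl | hw
        · exact absurd hwM ha
        · exact hM w hw hwM

/-- A fat set contains a diamond: a path between two of the three neighbours of `v`, together with
a shortest connection from the third one to that path, is a tripod, and `v` is joined to its three
ends. -/
lemma Fat.exists_diamond {S : Set V} (h : Fat G S) : ∃ D : G.Diamond, D.vertexSet ⊆ S := by
  classical
  obtain ⟨v, hv, x, y, z, hx, hy, hz, hxy, hxz, hyz, ⟨p₀, hp₀⟩, ⟨q₀, hq₀⟩⟩ := h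
  obtain ⟨p, hp, hpS⟩ : ∃ p : G.Walk x y, p.IsPath ∧ ∀ w ∈ p.support, w ∈ S \ {v} :=
    ⟨p₀.bypass, p₀.bypass_isPath, fun w hw => hp₀ w (p₀.support_bypass_subset_support hw)⟩
  obtain ⟨u, hu, q₁, hq₁, hqM⟩ := exists_first_hit (M := {w | w ∈ p.support}) q₀.reverse
    p.start_mem_support
  obtain ⟨q, hq, hqS, hqM⟩ : ∃ q : G.Walk z u, q.IsPath ∧ (∀ w ∈ q.support, w ∈ S \ {v}) ∧
      ∀ w ∈ q.support, w ∈ p.support → w = u := by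
    refine ⟨q₁.bypass, q₁.bypass_isPath, fun w hw => hq₀ w ?_, fun w hw =>
      hqM w (q₁.support_bypass_subset_support hw)⟩
    simpa using hq₁ (q₁.support_bypass_subset_support hw)
  have hu' : u ∈ p.support := hu
  have huv : u ≠ v := (hpS u hu').2
  set a := p.takeUntil u hu' with ha
  set b := p.dropUntil u hu' with hb
  have haS : ∀ w ∈ a.support, w ∈ p.support := fun w hw => p.support_takeUntil_subset_support _ hw
  have hbS : ∀ w ∈ b.support, w ∈ p.support := fun w hw => p.support_dropUntil_subset_support _ hw
  have hab : ∀ w, w ∈ a.support → w ∈ b.support → w = u := by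
    intro w h1 h2
    by_contra hne
    have hnd : (a.append b).support.Nodup := by
      rw [ha, hb, p.take_spec hu']; exact hp.support_nodup
    rw [Walk.support_append, List.nodup_append] at hnd
    rw [Walk.mem_support_iff] at h2
    exact hnd.2.2 w h1 w (h2.resolve_left hne) rfl
  have hva : v ∉ a.support := fun h => (hpS v (haS v h)).2 rfl
  have hvb : v ∉ b.support := fun h => (hpS v (hbS v h)).2 rfl
  have hvq : v ∉ q.support := fun h => (hqS v h).2 rfl
  have hne : ∀ {x y : V} (r : G.Walk u x) (s : G.Walk u y) (h : G.Adj x v) (h' : G.Adj y v),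
      x ≠ y → r.concat h ≠ s.concat h' := by
    intro x y r s h h' hxy heq
    apply hxy
    rw [← r.penultimate_concat h, ← s.penultimate_concat h', heq]
  refine ⟨⟨u, v, huv, a.reverse.concat hx.symm, b.concat hy.symm, q.reverse.concat hz.symm,
    (hp.takeUntil hu').reverse.concat (by simpa using hva) _,
    (hp.dropUntil hu').concat hvb _, hq.reverse.concat (by simpa using hvq) _,
    hne _ _ _ _ hxy, hne _ _ _ _ hxz, hne _ _ _ _ hyz, ?_, ?_, ?_⟩, ?_⟩
  · intro w h1 h2
    simp only [Walk.support_concat, List.mem_append, Walk.support_reverse,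
      List.mem_reverse, List.mem_singleton] at h1 h2
    rcases h1 with h1 | h1
    · rcases h2 with h2 | h2
      · exact .inl (hab w h1 h2)
      · exact .inr h2
    · exact .inr h1
  · intro w h1 h2
    simp only [Walk.support_concat, List.mem_append, Walk.support_reverse,
      List.mem_reverse, List.mem_singleton] at h1 h2
    rcases h1 with h1 | h1
    · rcases h2 with h2 | h2
      · exact .inl (hqM w h2 (haS w h1))
      · exact .inr h2
    · exact .inr h1
  · intro w h1 h2
    simp only [Walk.support_concat, List.mem_append, Walk.support_reverse,
      List.mem_reverse, List.mem_singleton] at h1 h2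
    rcases h1 with h1 | h1
    · rcases h2 with h2 | h2
      · exact .inl (hqM w h2 (hbS w h1))
      · exact .inr h2
    · exact .inr h1
  · intro w hw
    simp only [Diamond.vertexSet, Set.mem_ofPred_eq, Walk.support_concat,
      List.mem_append, Walk.support_reverse, List.mem_reverse, List.mem_singleton] at hw
    rcases hw with (h | rfl) | (h | rfl) | (h | rfl)
    exacts [(hpS w (haS w h)).1, hv, (hpS w (hbS w h)).1, hv, (hqS w h).1, hv]

end diamond

/-! ### Small fat sets in graphs of minimum degree three -/

section moore

/-- A parent function of a breadth-first search tree of the component of `r`: every vertex `x`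
at positive distance from `r` is sent to a neighbour one step closer to `r`. -/
def IsParent (H : SimpleGraph V) (r : V) (π : V → V) : Prop :=
  ∀ x, H.Reachable r x → x ≠ r →
    H.Adj (π x) x ∧ H.Reachable r (π x) ∧ H.dist r (π x) + 1 = H.dist r x

lemma exists_isParent (H : SimpleGraph V) (r : V) : ∃ π, IsParent H r π := by
  have : ∀ x, ∃ y, H.Reachable r x → x ≠ r →
      H.Adj y x ∧ H.Reachable r y ∧ H.dist r y + 1 = H.dist r x := by
    intro x
    by_cases hx : H.Reachable r x ∧ x ≠ r
    · obtain ⟨p, hp⟩ := hx.1.exists_walk_length_eq_dist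
      have hn : ¬ p.Nil := fun h => hx.2 h.eq.symm
      have h1 := p.adj_penultimate hn
      refine ⟨p.penultimate, fun _ _ => ⟨h1, ⟨p.dropLast⟩, ?_⟩⟩
      have h2 := p.concat_dropLast h1
      have h3 : p.dropLast.length + 1 = p.length := by
        rw [← Walk.length_concat p.dropLast h1, h2]
      have h4 := dist_le p.dropLast
      have h5 := h1.diff_dist_adj (u := r)
      omega
    · exact ⟨x, fun h h' => absurd ⟨h, h'⟩ hx⟩
  choose π hπ using this
  exact ⟨π, hπ⟩

variable {H : SimpleGraph V} {r : V} {π : V → V}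

/-- The vertices of the tree path from `x` to the root `r`. -/
noncomputable def treePath [DecidableEq V] (H : SimpleGraph V) (r : V) (π : V → V) (x : V) : Finset V :=
  (Finset.range (H.dist r x + 1)).image fun i => π^[i] x

lemma dist_iterate (hπ : IsParent H r π) (i : ℕ) (x : V) (hx : H.Reachable r x)
    (hi : i ≤ H.dist r x) :
    H.Reachable r (π^[i] x) ∧ H.dist r (π^[i] x) + i = H.dist r x := by
  induction i with
  | zero => simpa using hx
  | succ i ih =>
    obtain ⟨h1, h2⟩ := ih (by omega)
    rw [Function.iterate_succ_apply']
    have hne : π^[i] x ≠ r := by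
      intro h
      rw [h, dist_self] at h2
      omega
    obtain ⟨-, h3, h4⟩ := hπ _ h1 hne
    exact ⟨h3, by omega⟩

variable [DecidableEq V]

lemma card_treePath_le (x : V) : (treePath H r π x).card ≤ H.dist r x + 1 :=
  Finset.card_image_le.trans (by simp)

lemma mem_treePath (hπ : IsParent H r π) {x w : V} (hx : H.Reachable r x)
    (hw : w ∈ treePath H r π x) :
    ∃ i, i ≤ H.dist r x ∧ π^[i] x = w ∧ H.dist r w + i = H.dist r x := by
  obtain ⟨i, hi, rfl⟩ := Finset.mem_image.1 hw
  have hi' : i ≤ H.dist r x := by simpa [Nat.lt_succ_iff] using hi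
  exact ⟨i, hi', rfl, (dist_iterate hπ i x hx hi').2⟩

lemma connIn_treePath (hπ : IsParent H r π) {x : V} (hx : H.Reachable r x) :
    ConnIn H (treePath H r π x) x r := by
  have hmem : ∀ i, i ≤ H.dist r x → π^[i] x ∈ treePath H r π x := fun i hi =>
    Finset.mem_image.2 ⟨i, by simpa [Nat.lt_succ_iff] using hi, rfl⟩
  have key : ∀ i, i ≤ H.dist r x → ConnIn H (treePath H r π x) x (π^[i] x) := by
    intro i hi
    induction i with
    | zero => exact .refl (hmem 0 hi)
    | succ i ih =>
      obtain ⟨h1, h2⟩ := dist_iterate hπ i x hx (by omega)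
      have hne : π^[i] x ≠ r := by
        intro h
        rw [h, dist_self] at h2
        omega
      have h3 := (hπ _ h1 hne).1
      have h4 := hmem (i + 1) hi
      rw [Function.iterate_succ_apply'] at h4 ⊢
      exact (ih (by omega)).trans
        ((ConnIn.cons h3 h4 (.refl (hmem i (by omega)))).symm)
  obtain ⟨h1, h2⟩ := dist_iterate hπ _ x hx le_rfl
  have h3 : H.dist r (π^[H.dist r x] x) = 0 := by omega
  have h4 := key _ le_rfl
  rwa [← h1.dist_eq_zero_iff.1 h3] at h4

lemma fat_of_three {x a b c : V} {A₁ A₂ A₃ : Finset V} (ha : H.Adj x a) (hb : H.Adj x b)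
    (hc : H.Adj x c) (hab : a ≠ b) (hac : a ≠ c) (hbc : b ≠ c) (h₁ : ConnIn H A₁ a r)
    (h₂ : ConnIn H A₂ b r) (h₃ : ConnIn H A₃ c r) (hx₁ : x ∉ A₁) (hx₂ : x ∉ A₂) (hx₃ : x ∉ A₃) :
    Fat H ↑({x} ∪ A₁ ∪ A₂ ∪ A₃ : Finset V) := by
  have hm : ∀ A : Finset V, x ∉ A → A ⊆ {x} ∪ A₁ ∪ A₂ ∪ A₃ →
      (A : Set V) ⊆ (↑({x} ∪ A₁ ∪ A₂ ∪ A₃ : Finset V) : Set V) \ {x} := by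
    intro A hx hA w hw
    exact ⟨hA hw, fun h => hx (h ▸ hw)⟩
  have g₁ := h₁.mono (hm A₁ hx₁ (by intro w hw; simp [hw]))
  have g₂ := h₂.mono (hm A₂ hx₂ (by intro w hw; simp [hw]))
  have g₃ := h₃.mono (hm A₃ hx₃ (by intro w hw; simp [hw]))
  exact ⟨x, by simp, a, b, c, ha, hb, hc, hab, hac, hbc, g₁.trans g₂.symm, g₁.trans g₃.symm⟩

lemma card_three_le (x : V) (A₁ A₂ A₃ : Finset V) :
    ({x} ∪ A₁ ∪ A₂ ∪ A₃ : Finset V).card ≤ 1 + A₁.card + A₂.card + A₃.card := by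
  have h1 := Finset.card_union_le ({x} ∪ A₁ ∪ A₂) A₃
  have h2 := Finset.card_union_le ({x} ∪ A₁) A₂
  have h3 := Finset.card_union_le {x} A₁
  have h4 := Finset.card_singleton x
  omega

/-- `y` is a child of `x` in the breadth-first search tree. -/
def IsChild (H : SimpleGraph V) (r : V) (π : V → V) (x y : V) : Prop :=
  H.Reachable r y ∧ y ≠ r ∧ π y = x

omit [DecidableEq V] in
lemma IsChild.dist (hπ : IsParent H r π) {x y : V} (h : IsChild H r π x y) :
    H.dist r y = H.dist r x + 1 := by
  have := (hπ y h.1 h.2.1).2.2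
  rw [h.2.2] at this
  exact this.symm

omit [DecidableEq V] in
lemma IsChild.adj (hπ : IsParent H r π) {x y : V} (h : IsChild H r π x y) : H.Adj x y :=
  h.2.2 ▸ (hπ y h.1 h.2.1).1

lemma notMem_treePath (hπ : IsParent H r π) {x y : V} (hx : H.Reachable r x) (hxy : H.Adj x y)
    (hc : ¬ IsChild H r π x y) : x ∉ treePath H r π y := by
  intro h
  have hy : H.Reachable r y := hx.trans hxy.reachable
  obtain ⟨i, hi, h1, h2⟩ := mem_treePath hπ hy h
  have h3 := hxy.diff_dist_adj (u := r)
  have hi1 : i ≤ 1 := by omega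
  interval_cases i
  · exact hxy.ne h1.symm
  · refine hc ⟨hy, ?_, h1⟩
    rintro rfl
    simp at hi

lemma notMem_treePath_parent (hπ : IsParent H r π) {x : V} (hx : H.Reachable r x) (hxr : x ≠ r) :
    x ∉ treePath H r π (π x) := by
  intro h
  obtain ⟨h1, h2, h3⟩ := hπ x hx hxr
  obtain ⟨i, hi, h4, h5⟩ := mem_treePath hπ h2 h
  omega

variable {k : ℕ}

/-- Two edges leaving the tree at the same vertex `x ≠ r` give a small fat set: the parent of `x`
and the other ends of these edges are joined to `r` by tree paths that avoid `x`. -/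
lemma fat_of_two_nontree (hπ : IsParent H r π)
    (hno : ∀ Q : Finset V, Fat H Q → 6 * k + 2 < Q.card) {x y z : V} (hx : H.Reachable r x)
    (hxr : x ≠ r) (hxk : H.dist r x + 1 ≤ 2 * k) (hy : H.Adj x y) (hz : H.Adj x z) (hyz : y ≠ z)
    (hyp : y ≠ π x) (hzp : z ≠ π x) (hyc : ¬ IsChild H r π x y) (hzc : ¬ IsChild H r π x z) :
    False := by
  obtain ⟨h1, h2, h3⟩ := hπ x hx hxr
  have hQ := hno _ (fat_of_three h1.symm hy hz hyp.symm hzp.symm hyz (connIn_treePath hπ h2)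
    (connIn_treePath hπ (hx.trans hy.reachable)) (connIn_treePath hπ (hx.trans hz.reachable))
    (notMem_treePath_parent hπ hx hxr) (notMem_treePath hπ hx hy hyc)
    (notMem_treePath hπ hx hz hzc))
  have c0 := card_three_le x (treePath H r π (π x)) (treePath H r π y) (treePath H r π z)
  have c1 := card_treePath_le (H := H) (r := r) (π := π) (π x)
  have c2 := card_treePath_le (H := H) (r := r) (π := π) y
  have c3 := card_treePath_le (H := H) (r := r) (π := π) z
  have d2 := hy.diff_dist_adj (u := r)
  have d3 := hz.diff_dist_adj (u := r)
  omega

/-- A small fat set arises if `x ≠ r` has a single child `y` and both `x` and `y` are incident with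
an edge outside the tree. -/
lemma fat_of_nontree_chain (hπ : IsParent H r π)
    (hno : ∀ Q : Finset V, Fat H Q → 6 * k + 2 < Q.card) {x y w u : V} (hx : H.Reachable r x)
    (hxr : x ≠ r) (hxk : H.dist r x + 2 ≤ 2 * k) (hy : IsChild H r π x y)
    (hy1 : ∀ y', IsChild H r π x y' → y' = y)
    (hw : H.Adj x w) (hwp : w ≠ π x) (hwc : ¬ IsChild H r π x w)
    (hu : H.Adj y u) (hup : u ≠ π y) (huc : ¬ IsChild H r π y u) : False := by
  obtain ⟨h1, h2, h3⟩ := hπ x hx hxr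
  have hxy := hy.adj hπ
  have hdy := hy.dist hπ
  have hur : H.Reachable r u := hy.1.trans hu.reachable
  have du := hu.diff_dist_adj (u := r)
  have dw := hw.diff_dist_adj (u := r)
  have hxu : x ∉ insert y (treePath H r π u) := by
    intro h
    rcases Finset.mem_insert.1 h with h | h
    · exact hxy.ne h
    obtain ⟨i, hi, h4, h5⟩ := mem_treePath hπ hur h
    have hi2 : i ≤ 2 := by omega
    have hur0 : 1 ≤ i → u ≠ r := by
      rintro hi1 rfl
      simp at hi
      omega
    interval_cases i
    · exact hup (by rw [hy.2.2]; exact h4)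
    · exact hu.ne (hy1 u ⟨hur, hur0 le_rfl, h4⟩).symm
    · have h6 := hπ u hur (hur0 (by omega))
      have h7 : IsChild H r π x (π u) := by
        refine ⟨h6.2.1, ?_, h4⟩
        intro h
        rw [h, dist_self] at h6
        omega
      exact huc ⟨hur, hur0 (by omega), hy1 _ h7⟩
  have hyp : π x ≠ y := by
    intro h
    rw [h] at h3
    omega
  have cu : ConnIn H ↑(insert y (treePath H r π u)) y r :=
    .cons hu (by simp) ((connIn_treePath hπ hur).mono (by simp))
  have hQ := hno _ (fat_of_three h1.symm hw hxy hwp.symm hyp (fun h => hwc (h ▸ hy))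
    (connIn_treePath hπ h2) (connIn_treePath hπ (hx.trans hw.reachable)) cu
    (notMem_treePath_parent hπ hx hxr) (notMem_treePath hπ hx hw hwc) hxu)
  have c0 := card_three_le x (treePath H r π (π x)) (treePath H r π w)
    (insert y (treePath H r π u))
  have c1 := card_treePath_le (H := H) (r := r) (π := π) (π x)
  have c2 := card_treePath_le (H := H) (r := r) (π := π) w
  have c3 := card_treePath_le (H := H) (r := r) (π := π) u
  have c4 := Finset.card_insert_le y (treePath H r π u)
  omega

/-- Every vertex that is reachable from `r` has three distinct neighbours. -/
def DegThree (H : SimpleGraph V) (r : V) : Prop :=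
  ∀ x, H.Reachable r x → ∃ a b c, H.Adj x a ∧ H.Adj x b ∧ H.Adj x c ∧ a ≠ b ∧ a ≠ c ∧ b ≠ c

/-- Without small fat sets, a vertex close to `r` has two children, or it has one child and an edge
outside the tree. -/
lemma children (hπ : IsParent H r π) (hno : ∀ Q : Finset V, Fat H Q → 6 * k + 2 < Q.card)
    (hdeg : DegThree H r) {x : V} (hx : H.Reachable r x) (hxk : H.dist r x + 1 ≤ 2 * k) :
    (∃ y z, y ≠ z ∧ IsChild H r π x y ∧ IsChild H r π x z) ∨
    (x ≠ r ∧ ∃ y, IsChild H r π x y ∧ ∃ w, H.Adj x w ∧ w ≠ π x ∧ ¬ IsChild H r π x w) := by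
  obtain ⟨a, b, c, ha, hb, hc, hab, hac, hbc⟩ := hdeg x hx
  by_cases hxr : x = r
  · subst hxr
    have key : ∀ y, H.Adj x y → IsChild H x π x y := by
      intro y hy
      have h1 := hπ y hy.reachable hy.ne'
      have h2 : H.dist x y = 1 := dist_eq_one_iff_adj.2 hy
      have h3 : H.dist x (π y) = 0 := by omega
      exact ⟨hy.reachable, hy.ne', (h1.2.1.dist_eq_zero_iff.1 h3).symm⟩
    exact .inl ⟨a, b, hab, key a ha, key b hb⟩
  · -- Two of the three neighbours differ from the parent of `x`.
    obtain ⟨p, q, hp, hq, hpq, hpp, hqp⟩ : ∃ p q, H.Adj x p ∧ H.Adj x q ∧ p ≠ q ∧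
        p ≠ π x ∧ q ≠ π x := by
      by_cases h1 : a = π x
      · exact ⟨b, c, hb, hc, hbc, h1 ▸ hab.symm, h1 ▸ hac.symm⟩
      by_cases h2 : b = π x
      · exact ⟨a, c, ha, hc, hac, h1, h2 ▸ hbc.symm⟩
      · exact ⟨a, b, ha, hb, hab, h1, h2⟩
    by_cases h1 : IsChild H r π x p
    · by_cases h2 : IsChild H r π x q
      · exact .inl ⟨p, q, hpq, h1, h2⟩
      · exact .inr ⟨hxr, p, h1, q, hq, hqp, h2⟩
    · by_cases h2 : IsChild H r π x q
      · exact .inr ⟨hxr, q, h2, p, hp, hpp, h1⟩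
      · exact (fat_of_two_nontree hπ hno hx hxr hxk hp hq hpq hpp hqp h1 h2).elim

lemma grandchildren (hπ : IsParent H r π) (hno : ∀ Q : Finset V, Fat H Q → 6 * k + 2 < Q.card)
    (hdeg : DegThree H r) {x : V} (hx : H.Reachable r x) (hxk : H.dist r x + 2 ≤ 2 * k) :
    ∃ y z u t, u ≠ t ∧ IsChild H r π x y ∧ IsChild H r π x z ∧ IsChild H r π y u ∧
      IsChild H r π z t := by
  have one : ∀ y, IsChild H r π x y → ∃ u, IsChild H r π y u := by
    intro y hy
    have := hy.dist hπ
    rcases children hπ hno hdeg hy.1 (by omega) with ⟨u, _, _, hu, _⟩ | ⟨_, u, hu, _⟩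
    exacts [⟨u, hu⟩, ⟨u, hu⟩]
  by_cases h : ∃ y z, y ≠ z ∧ IsChild H r π x y ∧ IsChild H r π x z
  · obtain ⟨y, z, hyz, hy, hz⟩ := h
    obtain ⟨u, hu⟩ := one y hy
    obtain ⟨t, ht⟩ := one z hz
    refine ⟨y, z, u, t, ?_, hy, hz, hu, ht⟩
    rintro rfl
    exact hyz (hu.2.2.symm.trans ht.2.2)
  · rcases children hπ hno hdeg hx (by omega) with h' | ⟨hxr, y, hy, w, hw, hwp, hwc⟩
    · exact absurd h' h
    have hdy := hy.dist hπ
    rcases children hπ hno hdeg hy.1 (by omega) with ⟨u, t, hut, hu, ht⟩ | ⟨_, _, _, u, hu, hup, huc⟩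
    · exact ⟨y, y, u, t, hut, hy, hy, hu, ht⟩
    · refine (fat_of_nontree_chain hπ hno hx hxr hxk hy ?_ hw hwp hwc hu hup huc).elim
      intro y' hy'
      by_contra hne
      exact h ⟨y', y, hne, hy', hy⟩

/-- If all vertices in the component of `r` have degree at least three in a graph on `n` vertices,
then there is a fat set of at most `6 log₂ n + 8` vertices. Otherwise every vertex within distance `2 log₂ n` of the root of a breadth-first search
tree has at least two grandchildren, so the levels of even depth grow by factors of two. -/
lemma exists_small_fat [Fintype V] (hdeg : DegThree H r) :
    ∃ Q : Finset V, Fat H Q ∧ Q.card ≤ 6 * Nat.log 2 (Fintype.card V) + 8 := by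
  classical
  by_contra! hcon
  obtain ⟨π, hπ⟩ := exists_isParent H r
  -- With this `k` the level of depth `2 * k` would have `2 ^ k > n` vertices.
  obtain ⟨k, hk⟩ : ∃ k, k = Nat.log 2 (Fintype.card V) + 1 := ⟨_, rfl⟩
  have hno : ∀ Q : Finset V, Fat H Q → 6 * k + 2 < Q.card := by
    intro Q hQ
    have := hcon Q hQ
    omega
  let L : ℕ → Finset V := fun i => Finset.univ.filter fun x => H.Reachable r x ∧ H.dist r x = i
  have hL : ∀ j, j ≤ k → 2 ^ j ≤ (L (2 * j)).card := by
    intro j hj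
    induction j with
    | zero =>
      have : r ∈ L (2 * 0) := by simp [L]
      simpa using Finset.card_pos.2 ⟨r, this⟩
    | succ j ih =>
      have h1 : 2 * (L (2 * j)).card ≤ (L (2 * (j + 1))).card := by
        refine Finset.mul_card_image_le_card_of_maps_to (f := fun x => π (π x)) ?_ 2 ?_
        · intro u hu
          simp only [L, Finset.mem_filter, Finset.mem_univ, true_and] at hu ⊢
          have h2 := dist_iterate hπ 2 u hu.1 (by omega)
          refine ⟨h2.1, ?_⟩
          have h3 : H.dist r (π (π u)) + 2 = H.dist r u := h2.2
          omega
        · intro x hx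
          simp only [L, Finset.mem_filter, Finset.mem_univ, true_and] at hx
          obtain ⟨y, z, u, t, hut, hy, hz, hu, ht⟩ :=
            grandchildren hπ hno hdeg hx.1 (by omega)
          have e1 := hy.dist hπ
          have e2 := hz.dist hπ
          have e3 := hu.dist hπ
          have e4 := ht.dist hπ
          refine (Finset.card_pair hut).ge.trans (Finset.card_le_card ?_)
          intro w hw
          rw [Finset.mem_insert, Finset.mem_singleton] at hw
          rw [Finset.mem_filter]
          simp only [L, Finset.mem_filter, Finset.mem_univ, true_and]
          rcases hw with rfl | rfl
          · exact ⟨⟨hu.1, by omega⟩, by rw [hu.2.2, hy.2.2]⟩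
          · exact ⟨⟨ht.1, by omega⟩, by rw [ht.2.2, hz.2.2]⟩
      have := ih (by omega)
      rw [pow_succ]
      omega
  have h1 := hL k le_rfl
  have h2 := Finset.card_le_univ (L (2 * k))
  have h3 := Nat.lt_pow_succ_log_self (b := 2) (by norm_num) (Fintype.card V)
  rw [Nat.succ_eq_add_one, ← hk] at h3
  omega

end moore

/-! ### Separators and their torsos -/

section torso

/-- With `F = W \ B`, the vertex `w` is attached to `a ∈ B` if it is joined to `a` by a walk whose
vertices other than `a` lie in `F`. For `w ∈ F` these are the neighbours in `B` of the component of
`G[F]` containing `w`; a vertex of `B` is attached to itself only. -/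
def Att (G : SimpleGraph V) (W B : Set V) (w a : V) : Prop :=
  a ∈ B ∧ ConnIn G (W \ B ∪ {a}) w a

/-- The vertices of `W` all of whose attachments lie in `Q`: the vertices of `Q ∩ B` and the
components of `G[W \ B]` with all neighbours in `Q`. -/
def Span (G : SimpleGraph V) (W B Q : Set V) : Set V :=
  {w | w ∈ W ∧ ∀ a, Att G W B w a → a ∈ Q}

/-- `B` cuts `G[W]` into components without diamonds, each with at most two neighbours in `B`. -/
structure Good (G : SimpleGraph V) (W B : Set V) : Prop where
  sub : B ⊆ W
  not_fat : ¬ Fat G (W \ B)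
  two : ∀ w a b c, Att G W B w a → Att G W B w b → Att G W B w c → a = b ∨ a = c ∨ b = c

/-- The graph on `B` in which two vertices are adjacent if they are adjacent in `G` or
have a common neighbouring component of `G[W \ B]`. -/
def torso (G : SimpleGraph V) (W B : Set V) : SimpleGraph V where
  Adj a b := a ≠ b ∧ a ∈ B ∧ b ∈ B ∧ ConnIn G (W \ B ∪ {a, b}) a b
  symm := ⟨fun a b h => ⟨h.1.symm, h.2.2.1, h.2.1, Set.pair_comm a b ▸ h.2.2.2.symm⟩⟩
  loopless := ⟨fun _ h => h.1 rfl⟩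

variable {G : SimpleGraph V} {W B Q T : Set V} {a b v w x y z : V}

lemma Att.self (h : a ∈ B) : Att G W B a a := ⟨h, .refl (.inr rfl)⟩

lemma Att.eq_of_mem (h : Att G W B w a) (hw : w ∈ B) : w = a := by
  rcases h.2.left_mem with h | h
  exacts [absurd hw h.2, h]

lemma Att.cons (h : G.Adj w x) (hw : w ∈ W \ B) (hx : Att G W B x a) : Att G W B w a :=
  ⟨hx.1, .cons h (.inl hw) hx.2⟩

lemma Att.of_conn (h : ConnIn G (W \ B) w x) (hx : Att G W B x a) : Att G W B w a :=
  ⟨hx.1, (h.mono Set.subset_union_left).trans hx.2⟩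

lemma mem_span_of_mem (hB : B ⊆ W) (ha : a ∈ B) (hQ : a ∈ Q) : a ∈ Span G W B Q :=
  ⟨hB ha, fun _ h => h.eq_of_mem ha ▸ hQ⟩

lemma mem_of_mem_span (ha : a ∈ B) (h : a ∈ Span G W B Q) : a ∈ Q := h.2 a (.self ha)

/-- Diamonds that avoid `Q` also avoid the components spanned by `Q`, as these contain no diamonds
and are separated from the rest by `Q`. -/
lemma Good.fat_diff (h : Good G W B) (hT : T ⊆ W) (hd : Disjoint T Q) (hf : Fat G T) :
    Fat G (T \ Span G W B Q) := by
  have hF : ∀ w ∈ T, w ∈ Span G W B Q → w ∈ W \ B := fun w hw hs =>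
    ⟨hT hw, fun hB => Set.disjoint_left.1 hd hw (mem_of_mem_span hB hs)⟩
  have hcl : ∀ w w', w ∈ T → w' ∈ T → G.Adj w w' → w ∈ Span G W B Q → w' ∈ Span G W B Q := by
    intro w w' hw hw' hadj hs
    refine ⟨hT hw', fun a ha => ?_⟩
    exact hs.2 a (ha.cons hadj (hF w hw hs))
  obtain ⟨v, hv, x, y, z, hx, hy, hz, hxy, hxz, hyz, c₁, c₂⟩ := hf
  by_cases hvs : v ∈ Span G W B Q
  · -- The whole configuration would lie in one component of `G[W \ B]`.
    have hxs := hcl v x hv c₁.left_mem.1 hx hvs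
    have hsub : (T \ {v}) ∩ {w | w ∈ Span G W B Q} ⊆ (W \ B) \ {v} :=
      fun w hw => ⟨hF w hw.1.1 hw.2, hw.1.2⟩
    have hcl' : ∀ w w', w ∈ T \ {v} → w' ∈ T \ {v} → G.Adj w w' → w ∈ Span G W B Q →
      w' ∈ Span G W B Q := fun w w' h h' => hcl w w' h.1 h'.1
    exact (h.not_fat ⟨v, hF v hv hvs, x, y, z, hx, hy, hz, hxy, hxz, hyz,
      (c₁.of_closed hxs hcl').mono hsub, (c₂.of_closed hxs hcl').mono hsub⟩).elim
  · have hxs : x ∉ Span G W B Q := fun h => hvs (hcl x v c₁.left_mem.1 hv hx.symm h)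
    have hsub : (T \ {v}) ∩ {w | w ∉ Span G W B Q} ⊆ (T \ Span G W B Q) \ {v} :=
      fun w hw => ⟨⟨hw.1.1, hw.2⟩, hw.1.2⟩
    have hcl' : ∀ w w', w ∈ T \ {v} → w' ∈ T \ {v} → G.Adj w w' → w ∉ Span G W B Q →
      w' ∉ Span G W B Q := fun w w' h h' hadj hn hs => hn (hcl w' w h'.1 h.1 hadj.symm hs)
    exact ⟨v, ⟨hv, hvs⟩, x, y, z, hx, hy, hz, hxy, hxz, hyz,
      (c₁.of_closed hxs hcl').mono hsub, (c₂.of_closed hxs hcl').mono hsub⟩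

lemma Good.exists_pair (h : Good G W B) (hx : Att G W B x b) :
    ∃ b', ∀ a, Att G W B x a → a ∈ ({b, b'} : Set V) := by
  by_cases hc : ∃ b', b' ≠ b ∧ Att G W B x b'
  · obtain ⟨b', hne, hb'⟩ := hc
    refine ⟨b', fun a ha => ?_⟩
    rcases h.two x b b' a hx hb' ha with h | h | h
    exacts [absurd h.symm hne, .inl h.symm, .inr h.symm]
  · push Not at hc
    exact ⟨b, fun a ha => .inl (by_contra fun hne => hc a hne ha)⟩

/-- If a component of `G[W \ B]` together with a vertex `b` contains a diamond, then two vertices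
span a diamond. -/
lemma Good.fat_span_pair (h : Good G W B) (hb : b ∈ B) (hf : Fat G (W \ B ∪ {b})) :
    ∃ b', Fat G (Span G W B {b, b'}) := by
  obtain ⟨v, hv, x, y, z, hx, hy, hz, hxy, hxz, hyz, c₁, c₂⟩ := hf
  have hbs : ∀ b', b ∈ Span G W B {b, b'} := fun b' => mem_span_of_mem h.sub hb (.inl rfl)
  by_cases hvb : v = b
  · subst hvb
    have hsub : (W \ B ∪ {v}) \ {v} ⊆ W \ B := fun w hw => hw.1.resolve_right hw.2
    have hxF := hsub c₁.left_mem
    obtain ⟨b', hb'⟩ := h.exists_pair (Att.cons hx.symm hxF (Att.self hb))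
    have key : ∀ y, ConnIn G ((W \ B ∪ {v}) \ {v}) x y →
        ConnIn G (Span G W B {v, b'} \ {v}) x y := by
      rintro y ⟨p, hp⟩
      refine ⟨p, fun w hw => ⟨⟨(hsub (hp w hw)).1, fun a ha => hb' a ?_⟩, (hp w hw).2⟩⟩
      exact ha.of_conn ((ConnIn.of_mem_support p hp hw).1.mono hsub)
    exact ⟨b', v, hbs b', x, y, z, hx, hy, hz, hxy, hxz, hyz, key y c₁, key z c₂⟩
  · have hvF : v ∈ W \ B := hv.resolve_right hvb
    have hxb : ConnIn G ((W \ B ∪ {b}) \ {v}) x b := by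
      obtain ⟨p, hp⟩ := c₁
      obtain ⟨q, hq⟩ := c₂
      by_cases h1 : b ∈ p.support
      · exact (ConnIn.of_mem_support p hp h1).1
      by_cases h2 : b ∈ q.support
      · exact (ConnIn.of_mem_support q hq h2).1
      refine (h.not_fat ⟨v, hvF, x, y, z, hx, hy, hz, hxy, hxz, hyz, ⟨p, fun w hw => ?_⟩,
        ⟨q, fun w hw => ?_⟩⟩).elim
      · exact ⟨(hp w hw).1.resolve_right fun hwb => h1 (hwb ▸ hw), (hp w hw).2⟩
      · exact ⟨(hq w hw).1.resolve_right fun hwb => h2 (hwb ▸ hw), (hq w hw).2⟩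
    have hvb' : Att G W B v b := ⟨hb, .cons hx hv (hxb.mono Set.sdiff_subset)⟩
    obtain ⟨b', hb'⟩ := h.exists_pair hvb'
    -- A walk to `b` that is cut off at its first visit to `b` stays in the component of `v`.
    have trunc : ∀ (s b₀ : V) (p : G.Walk s b₀), b₀ = b →
        (∀ w ∈ p.support, w ∈ (W \ B ∪ {b}) \ {v}) → (s = b ∨ ConnIn G (W \ B) v s) →
        ConnIn G (Span G W B {b, b'} \ {v}) s b := by
      intro s b₀ p hb₀
      induction p with
      | nil =>
        intro _ _
        rw [hb₀]
        exact .refl ⟨hbs b', fun h => hvb h.symm⟩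
      | @cons s t u hadj p ih =>
        intro hp hs
        by_cases hsb : s = b
        · rw [hsb]
          exact .refl ⟨hbs b', fun h => hvb h.symm⟩
        have hs' := hs.resolve_left hsb
        have hp' : ∀ w ∈ p.support, w ∈ (W \ B ∪ {b}) \ {v} := fun w hw => hp w (by simp [hw])
        refine .cons hadj ⟨⟨hs'.right_mem.1, fun a ha => hb' a (ha.of_conn hs')⟩,
          (hp s (by simp)).2⟩ (ih hb₀ hp' ?_)
        rcases (hp' t p.start_mem_support).1 with ht | ht
        · exact .inr (hs'.trans (.cons hadj hs'.right_mem (.refl ht)))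
        · exact .inl ht
    have key : ∀ s, G.Adj v s → ConnIn G ((W \ B ∪ {b}) \ {v}) s b →
        ConnIn G (Span G W B {b, b'} \ {v}) s b := by
      rintro s hs ⟨p, hp⟩
      refine trunc s b p rfl hp ?_
      rcases (hp s p.start_mem_support).1 with ht | ht
      · exact .inr (.cons hs hvF (.refl ht))
      · exact .inl ht
    have k₁ := key x hx hxb
    have k₂ := key y hy (c₁.symm.trans hxb)
    have k₃ := key z hz (c₂.symm.trans hxb)
    exact ⟨b', v, ⟨hvF.1, hb'⟩, x, y, z, hx, hy, hz, hxy, hxz, hyz,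
      k₁.trans k₂.symm, k₁.trans k₃.symm⟩

lemma connIn_of_path {F : Set V} {p : G.Walk a b} (hp : p.IsPath)
    (hF : ∀ w ∈ p.support, w ∈ F ∪ {a, b}) (hw : w ∈ p.support) (hwb : w ≠ b) :
    ConnIn G (F ∪ {a}) w a := by
  classical
  refine ConnIn.symm ⟨p.takeUntil w hw, fun u hu => ?_⟩
  have hub : u ≠ b := by
    rintro rfl
    exact Walk.endpoint_notMem_support_takeUntil hp hw hwb.symm hu
  rcases hF u (p.support_takeUntil_subset_support hw hu) with h | h | h
  exacts [.inl h, .inr h, absurd h hub]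

lemma Good.exists_path (h : Good G W B) (hab : (torso G W B).Adj a b) (ha : a ∈ Q) (hb : b ∈ Q) :
    ∃ p : G.Walk a b, p.IsPath ∧ ∀ w ∈ p.support, w ∈ Span G W B Q ∧
      (w = a ∨ w = b ∨ (w ∈ W \ B ∧ Att G W B w a ∧ Att G W B w b)) := by
  classical
  obtain ⟨hne, haB, hbB, p₀, hp₀⟩ := hab
  refine ⟨p₀.bypass, p₀.bypass_isPath, fun w hw => ?_⟩
  have hS : ∀ w ∈ p₀.bypass.support, w ∈ W \ B ∪ {a, b} :=
    fun w hw => hp₀ w (p₀.support_bypass_subset_support hw)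
  by_cases hwa : w = a
  · subst hwa
    exact ⟨mem_span_of_mem h.sub haB ha, .inl rfl⟩
  by_cases hwb : w = b
  · subst hwb
    exact ⟨mem_span_of_mem h.sub hbB hb, .inr (.inl rfl)⟩
  have hwF : w ∈ W \ B := (hS w hw).resolve_right (by simp [hwa, hwb])
  have h₁ : Att G W B w a := ⟨haB, connIn_of_path p₀.bypass_isPath hS hw hwb⟩
  have h₂ : Att G W B w b := ⟨hbB, connIn_of_path p₀.bypass_isPath.reverse
    (by intro u hu; rw [Set.pair_comm]; exact hS u (by simpa using hu)) (by simpa using hw) hwa⟩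
  refine ⟨⟨hwF.1, fun c hc => ?_⟩, .inr (.inr ⟨hwF, h₁, h₂⟩)⟩
  rcases h.two w a b c h₁ h₂ hc with h | h | h
  exacts [absurd h hne, h ▸ ha, h ▸ hb]

lemma Good.connIn_span (h : Good G W B) (hv : v ∈ B) (hc : ConnIn (torso G W B) (Q \ {v}) a b)
    (ha : a ∈ B) : ConnIn G (Span G W B Q \ {v}) a b := by
  obtain ⟨p, hp⟩ := hc
  induction p with
  | nil =>
    have := hp _ (Walk.start_mem_support _)
    exact .refl ⟨mem_span_of_mem h.sub ha this.1, this.2⟩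
  | @cons s t u hadj q ih =>
    have hq : ∀ w ∈ q.support, w ∈ Q \ {v} := fun w hw => hp w (by simp [hw])
    have hs := hp s (by simp)
    have ht := hq t q.start_mem_support
    obtain ⟨r, -, hr⟩ := h.exists_path hadj hs.1 ht.1
    refine ConnIn.trans ⟨r, fun w hw => ⟨(hr w hw).1, fun hwv => ?_⟩⟩ (ih hadj.2.2.1 hq)
    rw [Set.mem_singleton_iff] at hwv
    subst hwv
    rcases (hr w hw).2 with h | h | h
    exacts [hs.2 h.symm, ht.2 h.symm, h.1.2 hv]

lemma Good.exists_neighbor (h : Good G W B) (hadj : (torso G W B).Adj v x) (hv : v ∈ Q)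
    (hx : x ∈ Q) : ∃ x', G.Adj v x' ∧ ConnIn G (Span G W B Q \ {v}) x' x ∧ Att G W B x' x ∧
      (x' = x ∨ Att G W B x' v) := by
  obtain ⟨p, hp, hS⟩ := h.exists_path hadj hv hx
  cases p with
  | nil => exact absurd rfl hadj.1
  | @cons _ x' _ h' q =>
    rw [Walk.cons_isPath_iff] at hp
    refine ⟨x', h', ⟨q, fun w hw => ⟨(hS w (by simp [hw])).1, fun hwv => hp.2 (hwv ▸ hw)⟩⟩, ?_⟩
    rcases (hS x' (by simp)).2 with h | h | h
    · exact absurd h.symm h'.ne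
    · subst h
      exact ⟨.self hadj.2.2.1, .inl rfl⟩
    · exact ⟨h.2.2, .inr h.2.1⟩

/-- Fat sets of the torso lift to `G`: each component of `G[W \ B]` realises at most one edge of the
torso, so the torso is a topological minor of `G`. -/
lemma Good.fat_span (h : Good G W B) (hf : Fat (torso G W B) Q) : Fat G (Span G W B Q) := by
  obtain ⟨v, hv, x, y, z, hx, hy, hz, hxy, hxz, hyz, c₁, c₂⟩ := hf
  have hvB : v ∈ B := hx.2.1
  have hne : ∀ {x y x' y'}, (torso G W B).Adj v x → (torso G W B).Adj v y → x ≠ y →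
      Att G W B x' x → (x' = x ∨ Att G W B x' v) → Att G W B y' y → x' ≠ y' := by
    rintro x y x' _ hx hy hxy h1 h2 h3 rfl
    rcases h2 with rfl | h2
    · exact hxy (h3.eq_of_mem h1.1)
    · rcases h.two x' v x y h2 h1 h3 with h | h | h
      exacts [hx.1 h, hy.1 h, hxy h]
  obtain ⟨x', hx1, hx2, hx3, hx4⟩ := h.exists_neighbor hx hv c₁.left_mem.1
  obtain ⟨y', hy1, hy2, hy3, hy4⟩ := h.exists_neighbor hy hv c₁.right_mem.1
  obtain ⟨z', hz1, hz2, hz3, hz4⟩ := h.exists_neighbor hz hv c₂.right_mem.1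
  exact ⟨v, mem_span_of_mem h.sub hvB hv, x', y', z', hx1, hy1, hz1,
    hne hx hy hxy hx3 hx4 hy3, hne hx hz hxz hx3 hx4 hz3, hne hy hz hyz hy3 hy4 hz3,
    hx2.trans ((h.connIn_span hvB c₁ hx.2.2.1).trans hy2.symm),
    hx2.trans ((h.connIn_span hvB c₂ hx.2.2.1).trans hz2.symm)⟩

/-- If neither `b` can be dropped from `B` nor a component of `G[W \ B]` contains a diamond
together with `b`, then `b` has three neighbours in the torso. -/
lemma Good.three_neighbors (h : Good G W B) (hb : b ∈ B) (hf : ¬ Fat G (W \ B ∪ {b}))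
    (hmin : ¬ Good G W (B \ {b})) :
    ∃ x y z, (torso G W B).Adj b x ∧ (torso G W B).Adj b y ∧ (torso G W B).Adj b z ∧
      x ≠ y ∧ x ≠ z ∧ y ≠ z := by
  classical
  have hF : W \ (B \ {b}) = W \ B ∪ {b} := by
    ext w
    simp only [Set.mem_sdiff, Set.mem_singleton_iff, Set.mem_union]
    constructor
    · rintro ⟨h1, h2⟩
      by_cases hwb : w = b
      · exact .inr hwb
      · exact .inl ⟨h1, fun h => h2 ⟨h, hwb⟩⟩
    · rintro (⟨h1, h2⟩ | rfl)
      · exact ⟨h1, fun h => h2 h.1⟩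
      · exact ⟨h.sub hb, fun h => h.2 rfl⟩
  have htwo : ¬ ∀ w x y z, Att G W (B \ {b}) w x → Att G W (B \ {b}) w y →
      Att G W (B \ {b}) w z → x = y ∨ x = z ∨ y = z :=
    fun h2 => hmin ⟨Set.sdiff_subset.trans h.sub, hF ▸ hf, h2⟩
  push Not at htwo
  obtain ⟨w, x, y, z, hx, hy, hz, hxy, hxz, hyz⟩ := htwo
  have dich : ∀ a, Att G W (B \ {b}) w a → Att G W B w a ∨ ConnIn G (W \ B ∪ {b}) w b := by
    rintro a ⟨ha, p, hp⟩
    rw [hF] at hp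
    have hp' : ∀ u ∈ p.bypass.support, u ∈ (W \ B ∪ {b}) ∪ {a} :=
      fun u hu => hp u (p.support_bypass_subset_support hu)
    by_cases hbp : b ∈ p.bypass.support
    · refine .inr ⟨p.bypass.takeUntil b hbp, fun u hu => ?_⟩
      refine (hp' u (Walk.support_takeUntil_subset_support _ hbp hu)).resolve_right fun hua => ?_
      rw [Set.mem_singleton_iff] at hua
      subst hua
      exact Walk.endpoint_notMem_support_takeUntil p.bypass_isPath hbp ha.2 hu
    · refine .inl ⟨ha.1, p.bypass, fun u hu => ?_⟩
      rcases hp' u hu with (h | h) | h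
      exacts [.inl h, absurd (h ▸ hu) hbp, .inr h]
  have hwb : ConnIn G (W \ B ∪ {b}) w b := by
    rcases dich x hx with h1 | h1
    · rcases dich y hy with h2 | h2
      · rcases dich z hz with h3 | h3
        · rcases h.two w x y z h1 h2 h3 with h | h | h
          exacts [absurd h hxy, absurd h hxz, absurd h hyz]
        · exact h3
      · exact h2
    · exact h1
  have adj : ∀ a, Att G W (B \ {b}) w a → (torso G W B).Adj b a := by
    intro a ha
    have ha2 := ha.2
    rw [hF] at ha2
    refine ⟨fun hab => ha.1.2 hab.symm, hb, ha.1.1, (hwb.symm.mono ?_).trans (ha2.mono ?_)⟩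
    · rintro u (h | h)
      exacts [.inl h, .inr (.inl h)]
    · rintro u ((h | h) | h)
      exacts [.inl h, .inr (.inl h), .inr (.inr h)]
  exact ⟨x, y, z, adj x hx, adj y hy, adj z hz, hxy, hxz, hyz⟩

variable [Fintype V]

lemma exists_minimal_good (G : SimpleGraph V) (W : Set V) :
    ∃ B, Good G W B ∧ ∀ b ∈ B, ¬ Good G W (B \ {b}) := by
  have h0 : Good G W W := by
    refine ⟨subset_rfl, ?_, ?_⟩
    · rintro ⟨v, hv, -⟩
      exact hv.2 hv.1
    · intro w a b c ha hb hc
      have key : ∀ a, Att G W W w a → w = a := by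
        intro a ha
        have := ha.2.left_mem
        simpa using this
      exact .inl ((key a ha).symm.trans (key b hb))
  obtain ⟨B, hB, hmin⟩ := Set.exists_min_image {B | Good G W B} Set.ncard (Set.toFinite _) ⟨W, h0⟩
  refine ⟨B, hB, fun b hb h => ?_⟩
  have := hmin _ h
  have := Set.ncard_sdiff_singleton_lt_of_mem hb
  omega

/-! ### Hitting and packing -/

/-- If `G[W]` contains a diamond, then there are a set `S` containing a diamond and a small set `Q`
such that the diamonds of `G[W]` avoiding `Q` also exist outside `S`. -/
lemma exists_fat_and_hitting (hW : Fat G W) :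
    ∃ (S : Set V) (Q : Finset V), S ⊆ W ∧ Fat G S ∧
      Q.card ≤ 6 * Nat.log 2 (Fintype.card V) + 8 ∧
      ∀ T ⊆ W, Disjoint T (Q : Set V) → Fat G T → Fat G (T \ S) := by
  classical
  obtain ⟨B, hB, hmin⟩ := exists_minimal_good G W
  have hsub : ∀ Q, Span G W B Q ⊆ W := fun Q w hw => hw.1
  by_cases hc : ∃ b ∈ B, Fat G (W \ B ∪ {b})
  · obtain ⟨b, hb, hf⟩ := hc
    obtain ⟨b', hb'⟩ := hB.fat_span_pair hb hf
    refine ⟨_, {b, b'}, hsub _, hb', ?_, fun T hT hd hfT => hB.fat_diff hT (by simpa using hd) hfT⟩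
    have := Finset.card_le_two (a := b) (b := b')
    omega
  · push Not at hc
    have hne : B.Nonempty := by
      rw [Set.nonempty_iff_ne_empty]
      rintro rfl
      exact hB.not_fat (by simpa using hW)
    obtain ⟨r, hr⟩ := hne
    have hdeg : DegThree (torso G W B) r := by
      rintro x ⟨p⟩
      have hx : x ∈ B := by
        by_cases hn : p.Nil
        · exact hn.eq ▸ hr
        · exact (p.adj_penultimate hn).2.2.1
      exact hB.three_neighbors hx (hc x hx) (hmin x hx)
    obtain ⟨Q, hQ, hcard⟩ := exists_small_fat hdeg
    exact ⟨_, Q, hsub _, hB.fat_span hQ, hcard, fun T hT hd hfT => hB.fat_diff hT hd hfT⟩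

end torso

/-- The greedy construction inside `W`, where `X` is to hit every fat subset of `W`; `m` bounds the
size of `W` and serves the induction only. -/
lemma exists_hitting_packing [Fintype V] (G : SimpleGraph V) (m : ℕ) :
    ∀ W : Set V, W.ncard ≤ m → ∃ (X : Finset V) (t : ℕ) (D : Fin t → G.Diamond),
      (∀ T ⊆ W, Fat G T → ∃ x ∈ X, x ∈ T) ∧ (∀ i, (D i).vertexSet ⊆ W) ∧
      (∀ i j : Fin t, i ≠ j → Disjoint (D i).vertexSet (D j).vertexSet) ∧
      X.card ≤ (6 * Nat.log 2 (Fintype.card V) + 8) * t := by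
  classical
  induction m with
  | zero =>
    intro W hW
    refine ⟨∅, 0, Fin.elim0, ?_, fun i => i.elim0, fun i => i.elim0, by simp⟩
    rintro T hT ⟨v, hv, -⟩
    have : W = ∅ := (Set.ncard_eq_zero (Set.toFinite W)).1 (by omega)
    exact absurd (hT hv) (by simp [this])
  | succ m ih =>
    intro W hW
    by_cases hf : Fat G W
    · obtain ⟨S, Q, hS, hSf, hQ, hK⟩ := exists_fat_and_hitting hf
      have hlt : (W \ S).ncard < W.ncard := by
        obtain ⟨v, hv, -⟩ := hSf
        exact Set.ncard_lt_ncard ⟨Set.sdiff_subset, fun h => (h (hS hv)).2 hv⟩ (Set.toFinite _)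
      obtain ⟨X, t, D, hX, hD, hdisj, hcard⟩ := ih (W \ S) (by omega)
      obtain ⟨D₀, hD₀⟩ := hSf.exists_diamond
      refine ⟨X ∪ Q, t + 1, Fin.cons D₀ D, ?_, ?_, ?_, ?_⟩
      · intro T hT hTf
        by_cases hd : Disjoint T (Q : Set V)
        · obtain ⟨x, hx, hxT⟩ := hX (T \ S) (Set.sdiff_subset_sdiff_left hT) (hK T hT hd hTf)
          exact ⟨x, by simp [hx], hxT.1⟩
        · obtain ⟨x, hxT, hxQ⟩ := Set.not_disjoint_iff.1 hd
          exact ⟨x, Finset.mem_union_right _ hxQ, hxT⟩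
      · intro i
        refine Fin.cases ?_ (fun i => ?_) i
        · exact hD₀.trans hS
        · exact (hD i).trans Set.sdiff_subset
      · have h0 : ∀ i, Disjoint D₀.vertexSet (D i).vertexSet := fun i =>
          Set.disjoint_left.2 fun x hx hx' => (hD i hx').2 (hD₀ hx)
        intro i j
        refine Fin.cases ?_ (fun i => ?_) i
        · refine Fin.cases (fun h => absurd rfl h) (fun j _ => ?_) j
          exact h0 j
        · refine Fin.cases (fun _ => ?_) (fun j hij => ?_) j
          · exact (h0 i).symm
          · exact hdisj i j fun h => hij (h ▸ rfl)
      · have := Finset.card_union_le X Q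
        rw [mul_add_one]
        omega
    · exact ⟨∅, 0, Fin.elim0, fun T hT h => absurd (h.mono hT) hf, fun i => i.elim0,
        fun i => i.elim0, by simp⟩

end DiamondPacking

/-- For every finite simple graph `G` on `n ≥ 2` vertices there are a diamond hitting set `X`
of `G` and a family of `t` pairwise vertex-disjoint diamonds of `G` with
`|X| ≤ (6·log_{3/2} n + 8)·t`. -/
theorem diamond_hitting_set_vs_packing (V : Type*) [Fintype V] [DecidableEq V]
    (G : SimpleGraph V) (hn : 2 ≤ Fintype.card V) :
    ∃ (X : Finset V) (t : ℕ) (D : Fin t → G.Diamond),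
      G.IsDiamondHittingSet ↑X ∧
      (∀ i j : Fin t, i ≠ j → Disjoint (D i).vertexSet (D j).vertexSet) ∧
      (X.card : ℝ) ≤ (6 * Real.logb (3 / 2) (Fintype.card V) + 8) * t := by
  obtain ⟨X, t, D, hX, -, hdisj, hcard⟩ :=
    DiamondPacking.exists_hitting_packing G _ Set.univ le_rfl
  refine ⟨X, t, D, fun D' => ?_, hdisj, ?_⟩
  · obtain ⟨x, hx, hx'⟩ := hX _ (Set.subset_univ _) (DiamondPacking.fat_vertexSet D')
    exact ⟨x, hx, hx'⟩
  have hn0 : (1 : ℝ) ≤ Fintype.card V := by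
    exact_mod_cast (by omega : 1 ≤ Fintype.card V)
  have h1 : (Nat.log 2 (Fintype.card V) : ℝ) ≤ Real.logb 2 (Fintype.card V) := by
    exact_mod_cast Real.natLog_le_logb (Fintype.card V) 2
  have h2 : Real.logb 2 (Fintype.card V) ≤ Real.logb (3 / 2) (Fintype.card V) := by
    unfold Real.logb
    exact div_le_div_of_nonneg_left (Real.log_nonneg hn0) (Real.log_pos (by norm_num))
      (Real.log_le_log (by norm_num) (by norm_num))
  have h3 : (X.card : ℝ) ≤ (6 * (Nat.log 2 (Fintype.card V) : ℝ) + 8) * t := by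
    exact_mod_cast hcard
  refine h3.trans (mul_le_mul_of_nonneg_right ?_ (Nat.cast_nonneg t))
  linarith
end
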